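/- (Lower tail of LERW length) Let d ≥ 5, N ≥ 1, and let D ⊆ Z^d satisfy Q_{4N} ⊆ D. Let L be the chronological loop erasure of simple random walk started at 0 and stopped at its first exit from D, and let M_N be the number of steps in L until its first hit of ∂_i Q_N. Then there exist constants C, c > 0 depending only on d such that for all λ > 0, P( M_N < λ N² ) ≤ C exp( -c λ^{-1} ). -/

import Mathlib

open MeasureTheory
open scoped ENNReal Classical

namespace USFPaper

/-- Vertices of the nearest-neighbour integer lattice `ℤ^d`. -/
abbrev V (d : ℕ) := Fin d → ℤ

variable {d : ℕ}

/-- Nearest-neighbour adjacency in `ℤ^d`. -/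
def adj (x y : V d) : Prop := (∑ i, |x i - y i|) = 1

/-- The cube `Q(x,r) = { y : ‖x - y‖_∞ ≤ r }`. -/
def cube (x : V d) (r : ℕ) : Set (V d) := { y | ∀ i, |y i - x i| ≤ (r : ℤ) }

/-- Inner boundary `∂ᵢA` of a set `A`. -/
def innerBdry (A : Set (V d)) : Set (V d) := { x | x ∈ A ∧ ∃ y, adj x y ∧ y ∉ A }

/-- Euclidean distance on `ℤ^d`. -/
noncomputable def eudist (x y : V d) : ℝ := Real.sqrt (∑ i, ((x i : ℝ) - (y i : ℝ)) ^ 2)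

/-- The `k`-th coordinate unit vector. -/
def unitVec (k : ℕ) : V d := fun i => if (i : ℕ) = k then 1 else 0

/-- `μ` is the law of simple random walk on `ℤ^d` started at `x`, as a probability
measure on path space: every nearest-neighbour cylinder of length `n` starting at `x`
has probability `(2d)⁻ⁿ`. -/
def IsSRWLaw (μ : Measure (ℕ → V d)) (x : V d) : Prop :=
  IsProbabilityMeasure μ ∧
  ∀ (n : ℕ) (γ : ℕ → V d), γ 0 = x → (∀ i < n, adj (γ i) (γ (i + 1))) →
    μ { ω | ∀ i ≤ n, ω i = γ i } = (2 * (d : ℝ≥0∞))⁻¹ ^ n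

/-- First exit time `τ_A` from `A`, valued in `ℕ∞` (`⊤` if the path never leaves `A`). -/
noncomputable def exitTimeE (A : Set (V d)) (ω : ℕ → V d) : ENat :=
  if h : ∃ j, ω j ∉ A then (Nat.find h : ENat) else ⊤

/-- First hitting time `T_A` of `A`, valued in `ℕ∞`. -/
noncomputable def hitTimeE (A : Set (V d)) (ω : ℕ → V d) : ENat :=
  if h : ∃ j, ω j ∈ A then (Nat.find h : ENat) else ⊤

/-- First positive hitting time `T⁺_A` of `A`, valued in `ℕ∞`. -/
noncomputable def hitTimePosE (A : Set (V d)) (ω : ℕ → V d) : ENat :=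
  if h : ∃ j, 1 ≤ j ∧ ω j ∈ A then (Nat.find h : ENat) else ⊤

/-- First exit time from `A` as a natural number (junk value `0` if the path never exits). -/
noncomputable def exitTime (A : Set (V d)) (ω : ℕ → V d) : ℕ := (exitTimeE A ω).toNat

/-- Index of the first hit of `A` (junk value `0` if `A` is never hit). -/
noncomputable def hitIdx (A : Set (V d)) (γ : ℕ → V d) : ℕ := (hitTimeE A γ).toNat

/-- First index `≥ t` at which the path lies in `A` (junk value `t`). -/
noncomputable def hitIdxFrom (A : Set (V d)) (t : ℕ) (γ : ℕ → V d) : ℕ :=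
  if h : ∃ j, t ≤ j ∧ γ j ∈ A then Nat.find h else t

/-- The path frozen at its first exit from `D`. -/
noncomputable def stopAt (D : Set (V d)) (ω : ℕ → V d) : ℕ → V d :=
  fun j => if (j : ENat) ≤ exitTimeE D ω then ω j else ω (exitTime D ω)

/-- Time of the last visit of the path to the point `ω t`, at or after time `t`
(junk value if there are infinitely many such visits). -/
noncomputable def lastVisit (ω : ℕ → V d) (t : ℕ) : ℕ := sSup { j | t ≤ j ∧ ω j = ω t }

/-- The times of the chronological loop erasure (last-exit decomposition). -/
noncomputable def leTime (ω : ℕ → V d) : ℕ → ℕ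
  | 0 => lastVisit ω 0
  | k + 1 => lastVisit ω (leTime ω k + 1)

/-- Chronological loop erasure of an (infinite, transient) path. -/
noncomputable def infLoopErase (ω : ℕ → V d) : ℕ → V d := fun k => ω (leTime ω k)

/-- The loop erasure `L` of the walk stopped at its first exit from `D`. -/
noncomputable def lerw (D : Set (V d)) (ω : ℕ → V d) : ℕ → V d := infLoopErase (stopAt D ω)

/-- The event `T_A > τ_D`: the walk does not visit `A` at any time up to (and
including) its first exit from `D`; if it never exits `D`, it never visits `A`. -/
def avoidBeforeExit (D A : Set (V d)) (ω : ℕ → V d) : Prop :=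
  ∀ j : ℕ, (j : ENat) ≤ exitTimeE D ω → ω j ∉ A

/-- The event `T⁺_A > τ_D` (visits of `A` at positive times only). -/
def avoidBeforeExitPos (D A : Set (V d)) (ω : ℕ → V d) : Prop :=
  ∀ j : ℕ, 1 ≤ j → (j : ENat) ≤ exitTimeE D ω → ω j ∉ A

/-- The right-hand face (in the first coordinate direction) of the cube `Q(x₀,m)`. -/
def rightFace (x₀ : V d) (m : ℕ) : Set (V d) :=
  { y | y ∈ cube x₀ m ∧ ∀ i : Fin d, (i : ℕ) = 0 → y i = x₀ i + (m : ℤ) }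


section Part1

abbrev U (d : ℕ) := Fin d × Bool

def ev (s : U d) : V d := fun i => if i = s.1 then (if s.2 then 1 else -1) else 0

def walk (x : V d) (ξ : ℕ → U d) : ℕ → V d
  | 0 => x
  | n + 1 => walk x ξ n + ev (ξ n)

def scons (s : U d) (ξ : ℕ → U d) : ℕ → U d
  | 0 => s
  | n + 1 => ξ n

lemma walk_scons (x : V d) (s : U d) (ξ : ℕ → U d) (n : ℕ) :
    walk x (scons s ξ) (n + 1) = walk (x + ev s) ξ n := by
  induction n with
  | zero => rfl
  | succ n ih => rw [walk, ih]; rfl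

lemma walk_translate (x y : V d) (ξ : ℕ → U d) (n : ℕ) :
    walk (x + y) ξ n = x + walk y ξ n := by
  induction n with
  | zero => rfl
  | succ n ih => rw [walk, ih, walk, add_assoc]

noncomputable def q (d : ℕ) : Measure (U d) := (2 * (d : ℝ≥0∞))⁻¹ • Measure.count

instance [NeZero d] : IsProbabilityMeasure (q d) := by
  constructor
  have h : (d : ℝ≥0∞) ≠ 0 := by exact_mod_cast NeZero.ne d
  simp only [q, Measure.smul_apply, smul_eq_mul, Measure.count_univ, ENat.card_eq_coe_fintype_card,
    Fintype.card_prod, Fintype.card_fin, Fintype.card_bool]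
  rw [mul_comm 2]
  push_cast
  refine ENNReal.inv_mul_cancel (by simp [NeZero.ne d]) ?_
  exact ENNReal.mul_ne_top (by simp) (by simp)

noncomputable def P0 (d : ℕ) [NeZero d] : Measure (ℕ → U d) := Measure.infinitePi (fun _ => q d)

instance [NeZero d] : IsProbabilityMeasure (P0 d) := by unfold P0; infer_instance

lemma measurable_scons (s : U d) : Measurable (scons s) := by
  rw [measurable_pi_iff]
  intro n
  cases n with
  | zero => exact measurable_const
  | succ n => exact measurable_pi_apply n

lemma q_apply (t : Set (U d)) : q d t = ∑ s, (2 * (d : ℝ≥0∞))⁻¹ * Set.indicator t 1 s := by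
  rw [q, Measure.smul_apply, smul_eq_mul, ← Finset.mul_sum]
  congr 1
  rw [Measure.count_apply (Set.toFinite t).measurableSet]
  rw [Set.encard_eq_coe_toFinset_card]
  simp only [Set.indicator_apply, Pi.one_apply, Finset.sum_boole]
  simp [Set.toFinset_card, Fintype.card_subtype]

lemma P0_range [NeZero d] (n : ℕ) (t : ℕ → Set (U d)) :
    P0 d (Set.pi (Finset.range n : Finset ℕ) t) = ∏ i ∈ Finset.range n, q d (t i) := by
  unfold P0
  rw [Measure.infinitePi_pi]
  intro i _
  exact (Set.toFinite _).measurableSet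

lemma P0_eq [NeZero d] :
    (∑ s : U d, (2 * (d : ℝ≥0∞))⁻¹ • (P0 d).map (scons s)) = P0 d := by
  conv_rhs => rw [P0]
  apply Measure.eq_infinitePi
  intro I t ht
  obtain ⟨n, hn⟩ : ∃ n, I ⊆ Finset.range (n + 1) :=
    ⟨I.sup id, fun i hi => Finset.mem_range_succ_iff.2 (Finset.le_sup (f := id) hi)⟩
  set t' : ℕ → Set (U d) := fun i => if i ∈ I then t i else Set.univ with ht'
  have h1 : Set.pi (I : Set ℕ) t = Set.pi (Finset.range (n+1) : Finset ℕ) t' := by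
    ext ξ
    simp only [Set.mem_pi, Finset.mem_coe, ht']
    constructor
    · intro h i hi
      by_cases hI : i ∈ I
      · simpa [hI] using h i hI
      · simp [hI]
    · intro h i hi
      simpa [hi] using h i (hn hi)
  have h2 : ∏ i ∈ I, q d (t i) = ∏ i ∈ Finset.range (n+1), q d (t' i) := by
    rw [← Finset.prod_subset hn]
    · refine Finset.prod_congr rfl fun i hi => by simp [ht', hi]
    · intro i _ hi
      simp [ht', hi]
  rw [h1, h2, Finset.prod_range_succ', ← P0_range, q_apply, Finset.mul_sum,
    Measure.finsetSum_apply]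
  refine Finset.sum_congr rfl fun s _ => ?_
  rw [Measure.smul_apply, Measure.map_apply (measurable_scons s), smul_eq_mul]
  · rw [mul_left_comm]
    congr 1
    by_cases hs : s ∈ t' 0
    · simp only [hs, Set.indicator_of_mem, Pi.one_apply, mul_one]
      congr 1
      ext ξ
      simp only [Set.mem_preimage, Set.mem_pi, Finset.mem_coe, Finset.mem_range]
      constructor
      · intro h i hi
        exact h (i+1) (by omega)
      · intro h i hi
        cases i with
        | zero => exact hs
        | succ i => exact h i (by omega)
    · simp only [hs, not_false_eq_true, Set.indicator_of_notMem, mul_zero]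
      convert measure_empty (μ := P0 d)
      ext ξ
      simp only [Set.mem_preimage, Set.mem_pi, Finset.mem_coe, Finset.mem_range,
        Set.mem_empty_iff_false, iff_false]
      intro h
      exact hs (h 0 (by omega))
  · exact MeasurableSet.pi (Finset.range (n+1)).countable_toSet
      fun i _ => (Set.toFinite _).measurableSet

lemma P0_step [NeZero d] {B : Set (ℕ → U d)} (hB : MeasurableSet B) :
    P0 d B = ∑ s : U d, (2 * (d : ℝ≥0∞))⁻¹ * P0 d {ξ | scons s ξ ∈ B} := by
  conv_lhs => rw [← P0_eq]
  rw [Measure.finsetSum_apply]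
  refine Finset.sum_congr rfl fun s _ => ?_
  rw [Measure.smul_apply, Measure.map_apply (measurable_scons s) hB, smul_eq_mul]
  rfl

lemma sum_const_U [NeZero d] (c : ℝ≥0∞) : ∑ _s : U d, (2 * (d : ℝ≥0∞))⁻¹ * c = c := by
  have h := measure_univ (μ := q d)
  rw [q_apply] at h
  simp only [Set.indicator_univ, Pi.one_apply, mul_one] at h
  rw [← Finset.sum_mul, h, one_mul]

lemma measurable_walk (x : V d) : Measurable (walk x) := by
  rw [measurable_pi_iff]
  intro n
  induction n with
  | zero => exact measurable_const
  | succ n ih =>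
    have : Measurable (ev : U d → V d) := measurable_of_countable _
    exact ih.add (this.comp (measurable_pi_apply n))

end Part1

section Part2

lemma ev_injective : Function.Injective (ev : U d → V d) := by
  rintro ⟨i, b⟩ ⟨j, c⟩ h
  have h1 := congrFun h i
  have h2 := congrFun h j
  simp only [ev] at h1 h2
  by_cases hij : i = j
  · subst hij
    cases b <;> cases c <;> simp_all
  · cases b <;> simp_all

lemma adj_iff (x y : V d) : adj x y ↔ ∃ s : U d, y = x + ev s := by
  constructor
  · intro h
    unfold adj at h
    have hne : ∃ i, x i - y i ≠ 0 := by
      by_contra! hc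
      simp [hc] at h
    obtain ⟨i, hi⟩ := hne
    have hsum := Finset.add_sum_erase Finset.univ (fun i => |x i - y i|) (Finset.mem_univ i)
    have hpos : 1 ≤ |x i - y i| := Int.one_le_abs hi
    have hnn : 0 ≤ ∑ j ∈ Finset.univ.erase i, |x j - y j| :=
      Finset.sum_nonneg fun _ _ => abs_nonneg _
    have h0 : ∑ j ∈ Finset.univ.erase i, |x j - y j| = 0 := by omega
    have h1 : |x i - y i| = 1 := by omega
    have hz : ∀ j, j ≠ i → x j = y j := by
      intro j hj
      have := (Finset.sum_eq_zero_iff_of_nonneg (fun _ _ => abs_nonneg _)).1 h0 j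
        (Finset.mem_erase.2 ⟨hj, Finset.mem_univ j⟩)
      have := abs_eq_zero.1 this
      omega
    rcases (abs_eq (by norm_num)).1 h1 with h2 | h2
    · refine ⟨(i, false), ?_⟩
      funext j
      by_cases hj : j = i
      · subst hj; simp [ev]; omega
      · simp [ev, hj, hz j hj]
    · refine ⟨(i, true), ?_⟩
      funext j
      by_cases hj : j = i
      · subst hj; simp [ev]; omega
      · simp [ev, hj, hz j hj]
  · rintro ⟨⟨i, b⟩, rfl⟩
    unfold adj
    rw [Finset.sum_eq_single i]
    · cases b <;> simp [ev]
    · intro j _ hj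
      simp [ev, hj]
    · simp

lemma measSet_V (s : Set (V d)) : MeasurableSet s := s.to_countable.measurableSet

lemma measurableSet_cyl (n : ℕ) (γ : ℕ → V d) :
    MeasurableSet {ω : ℕ → V d | ∀ i ≤ n, ω i = γ i} := by
  have : {ω : ℕ → V d | ∀ i ≤ n, ω i = γ i} = ⋂ i, ⋂ (_ : i ≤ n), (fun ω => ω i) ⁻¹' {γ i} := by
    ext; simp
  rw [this]
  exact MeasurableSet.iInter fun i => MeasurableSet.iInter fun _ =>
    (measurable_pi_apply i) (measSet_V _)

lemma P0_cyl [NeZero d] (n : ℕ) : ∀ (x : V d) (γ : ℕ → V d), γ 0 = x →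
    (∀ i < n, adj (γ i) (γ (i + 1))) →
    P0 d {ξ | ∀ i ≤ n, walk x ξ i = γ i} = (2 * (d : ℝ≥0∞))⁻¹ ^ n := by
  induction n with
  | zero =>
    intro x γ h0 _
    have : {ξ : ℕ → U d | ∀ i ≤ 0, walk x ξ i = γ i} = Set.univ := by
      ext ξ; simp [walk, h0]
    rw [this]; simp
  | succ n ih =>
    intro x γ h0 hadj
    rw [P0_step]
    swap
    · exact measurable_walk x (measurableSet_cyl (n+1) γ)
    obtain ⟨s0, hs0⟩ := (adj_iff _ _).1 (hadj 0 (by omega))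
    rw [h0] at hs0
    rw [Finset.sum_eq_single s0]
    · rw [pow_succ, mul_comm]
      congr 1
      rw [← ih (x + ev s0) (fun i => γ (i+1)) (by simpa using hs0) (fun i hi => hadj (i+1) (by omega))]
      congr 1
      ext ξ
      constructor
      · intro h i hi
        have := h (i+1) (by omega)
        rwa [walk_scons] at this
      · intro h i hi
        cases i with
        | zero => exact h0.symm
        | succ i => rw [walk_scons]; exact h i (by omega)
    · intro s _ hs
      have : {ξ : ℕ → U d | scons s ξ ∈ {ξ | ∀ i ≤ n+1, walk x ξ i = γ i}} = ∅ := by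
        ext ξ
        simp only [Set.mem_ofPred_eq, Set.mem_empty_iff_false, iff_false]
        intro h
        have h1 := h 1 (by omega)
        rw [walk_scons] at h1
        simp only [walk] at h1
        rw [show γ 1 = x + ev s0 from hs0] at h1
        exact hs (ev_injective (add_left_cancel h1))
      rw [this]; simp
    · simp

lemma walk_adj (x : V d) (ξ : ℕ → U d) (i : ℕ) : adj (walk x ξ i) (walk x ξ (i+1)) :=
  (adj_iff _ _).2 ⟨ξ i, rfl⟩

def goodTo (n : ℕ) (γ : ℕ → V d) : Prop := γ 0 = 0 ∧ ∀ i < n, adj (γ i) (γ (i + 1))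

def ext0 (n : ℕ) (g : Fin (n+1) → V d) : ℕ → V d := fun i => if h : i < n + 1 then g ⟨i, h⟩ else 0

lemma cyl_ext0 (n : ℕ) (γ : ℕ → V d) :
    {ω : ℕ → V d | ∀ i ≤ n, ω i = ext0 n (fun j => γ j) i} = {ω | ∀ i ≤ n, ω i = γ i} := by
  ext ω
  refine forall_congr' fun i => forall_congr' fun hi => ?_
  simp [ext0, Nat.lt_succ_of_le hi]

lemma goodTo_congr {n : ℕ} {γ γ' : ℕ → V d} (h : ∀ i ≤ n, γ i = γ' i) (hg : goodTo n γ) :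
    goodTo n γ' := by
  refine ⟨by rw [← h 0 (by omega)]; exact hg.1, fun i hi => ?_⟩
  rw [← h i (by omega), ← h (i+1) (by omega)]
  exact hg.2 i hi

lemma cyl_partition (ν : Measure (ℕ → V d)) (n : ℕ) :
    ν {ω | goodTo n ω} = ∑' g : Fin (n+1) → V d,
      if goodTo n (ext0 n g) then ν {ω | ∀ i ≤ n, ω i = ext0 n g i} else 0 := by
  have h1 : {ω : ℕ → V d | goodTo n ω} = ⋃ g : Fin (n+1) → V d,
      if goodTo n (ext0 n g) then {ω | ∀ i ≤ n, ω i = ext0 n g i} else ∅ := by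
    ext ω
    simp only [Set.mem_ofPred_eq, Set.mem_iUnion]
    constructor
    · intro h
      refine ⟨fun j => ω j, ?_⟩
      have hh : ∀ i ≤ n, ω i = ext0 n (fun j => ω j) i := by
        have : ω ∈ {ω' : ℕ → V d | ∀ i ≤ n, ω' i = ω i} := fun i _ => rfl
        rw [← cyl_ext0] at this
        exact this
      rw [if_pos (goodTo_congr hh h)]
      exact hh
    · rintro ⟨g, hg⟩
      split_ifs at hg with hgood
      · exact goodTo_congr (fun i hi => (hg i hi).symm) hgood
      · exact hg.elim
  rw [h1, measure_iUnion]
  · refine tsum_congr fun g => ?_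
    split_ifs <;> simp
  · intro g g' hgg
    rw [Function.onFun, Set.disjoint_left]
    intro ω h h'
    split_ifs at h h' <;> try exact (h.elim)
    · apply hgg
      funext j
      have e1 := h j (by omega)
      have e2 := h' j (by omega)
      rw [e1] at e2
      simpa [ext0, Nat.le_of_lt_succ j.2] using e2
    · exact h'.elim
  · intro g
    split_ifs
    · exact measurableSet_cyl _ _
    · exact MeasurableSet.empty

lemma law_unique [NeZero d] (μ : Measure (ℕ → V d)) (h : IsSRWLaw μ 0) :
    μ = (P0 d).map (walk 0) := by
  obtain ⟨hp, hc⟩ := h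
  have hmap : IsProbabilityMeasure ((P0 d).map (walk (0 : V d))) :=
    Measure.isProbabilityMeasure_map (measurable_walk 0).aemeasurable
  have hc' : ∀ (n : ℕ) (γ : ℕ → V d), γ 0 = 0 → (∀ i < n, adj (γ i) (γ (i + 1))) →
      (P0 d).map (walk 0) { ω | ∀ i ≤ n, ω i = γ i } = (2 * (d : ℝ≥0∞))⁻¹ ^ n := by
    intro n γ h0 ha
    rw [Measure.map_apply (measurable_walk 0) (measurableSet_cyl _ _)]
    exact P0_cyl n 0 γ h0 ha
  have hmeas : ∀ n, MeasurableSet {ω : ℕ → V d | goodTo n ω} := by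
    intro n
    have : {ω : ℕ → V d | goodTo n ω} = (fun ω => ω 0) ⁻¹' {0} ∩
        ⋂ i, ⋂ (_ : i < n), (fun ω : ℕ → V d => (ω i, ω (i+1))) ⁻¹' {p | adj p.1 p.2} := by
      ext ω; simp [goodTo]
    rw [this]
    refine MeasurableSet.inter ((measurable_pi_apply (X := fun _ : ℕ => V d) 0) (measSet_V _)) ?_
    refine MeasurableSet.iInter fun i => MeasurableSet.iInter fun _ => ?_
    exact ((measurable_pi_apply i).prodMk (measurable_pi_apply (i+1)))
      (Set.to_countable _).measurableSet
  have hone : ∀ n, (P0 d).map (walk 0) {ω : ℕ → V d | goodTo n ω} = 1 := by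
    intro n
    rw [Measure.map_apply (measurable_walk 0) (hmeas n)]
    convert measure_univ (μ := P0 d)
    ext ξ
    simp only [Set.mem_preimage, Set.mem_ofPred_eq, Set.mem_univ, iff_true]
    exact ⟨rfl, fun i _ => walk_adj 0 ξ i⟩
  have hone' : ∀ n, μ {ω : ℕ → V d | goodTo n ω} = 1 := by
    intro n
    rw [← hone n, cyl_partition, cyl_partition]
    refine tsum_congr fun g => ?_
    split_ifs with hg
    · rw [hc _ _ hg.1 hg.2, hc' _ _ hg.1 hg.2]
    · rfl
  have hzero : ∀ (ν : Measure (ℕ → V d)) [IsProbabilityMeasure ν], (∀ n, ν {ω | goodTo n ω} = 1) →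
      ∀ n γ, ¬ goodTo n γ → ν { ω | ∀ i ≤ n, ω i = γ i } = 0 := by
    intro ν _ hν n γ hg
    have := (prob_compl_eq_zero_iff (hmeas n)).2 (hν n)
    refine measure_mono_null ?_ this
    intro ω hω hgood
    exact hg (goodTo_congr hω hgood)
  have hall : ∀ (n : ℕ) (γ : ℕ → V d), μ { ω | ∀ i ≤ n, ω i = γ i } =
      (P0 d).map (walk 0) { ω | ∀ i ≤ n, ω i = γ i } := by
    intro n γ
    by_cases hg : goodTo n γ
    · rw [hc _ _ hg.1 hg.2, hc' _ _ hg.1 hg.2]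
    · rw [hzero μ hone' n γ hg, hzero _ hone n γ hg]
  let C : Set (Set (ℕ → V d)) := {s | ∃ (n : ℕ) (γ : ℕ → V d), s = { ω | ∀ i ≤ n, ω i = γ i }}
  refine ext_of_generate_finite C ?_ ?_ ?_ ?_
  · apply le_antisymm
    · rw [MeasurableSpace.pi]
      refine iSup_le fun i => ?_
      rw [← measurable_iff_comap_le]
      refine @measurable_to_countable' _ _ _ _ (MeasurableSpace.generateFrom C) _ ?_
      intro x
      have : (fun ω : ℕ → V d => ω i) ⁻¹' {x} = ⋃ g : Fin (i+1) → V d,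
          if g (Fin.last i) = x then {ω | ∀ j ≤ i, ω j = ext0 i g j} else ∅ := by
        ext ω
        simp only [Set.mem_preimage, Set.mem_singleton_iff, Set.mem_iUnion]
        constructor
        · intro h
          refine ⟨fun j => ω j, ?_⟩
          rw [if_pos (by simpa using h), cyl_ext0]
          exact fun _ _ => rfl
        · rintro ⟨g, hg⟩
          split_ifs at hg with hx
          · have := hg i le_rfl
            rw [this, ← hx]
            simp [ext0, Fin.last]
          · exact hg.elim
      rw [this]
      refine MeasurableSet.iUnion fun g => ?_
      split_ifs
      · exact MeasurableSpace.measurableSet_generateFrom ⟨i, _, rfl⟩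
      · exact @MeasurableSet.empty _ (MeasurableSpace.generateFrom C)
    · refine MeasurableSpace.generateFrom_le ?_
      rintro s ⟨n, γ, rfl⟩
      exact measurableSet_cyl n γ
  · rintro s ⟨n, γ, rfl⟩ t ⟨m, γ', rfl⟩ ⟨ω, h1, h2⟩
    refine ⟨max n m, ω, ?_⟩
    ext ω'
    simp only [Set.mem_inter_iff, Set.mem_ofPred_eq]
    constructor
    · rintro ⟨h3, h4⟩ i hi
      rcases le_max_iff.1 hi with h | h
      · rw [h3 i h, h1 i h]
      · rw [h4 i h, h2 i h]
    · intro h3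
      exact ⟨fun i hi => by rw [h3 i (le_max_of_le_left hi), h1 i hi],
        fun i hi => by rw [h3 i (le_max_of_le_right hi), h2 i hi]⟩
  · rintro s ⟨n, γ, rfl⟩
    exact hall n γ
  · simp

end Part2

section Part3

/-- real return probabilities -/
noncomputable def pr (d : ℕ) : ℕ → V d → ℝ
  | 0 => fun y => if y = 0 then 1 else 0
  | k + 1 => fun y => ∑ s : U d, (2 * (d : ℝ))⁻¹ * pr d k (y + ev s)

lemma pr_nonneg (k : ℕ) : ∀ y : V d, 0 ≤ pr d k y := by
  induction k with
  | zero => intro y; simp only [pr]; split_ifs <;> norm_num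
  | succ k ih => intro y; exact Finset.sum_nonneg fun s _ => mul_nonneg (by positivity) (ih _)

lemma P0_loop [NeZero d] {B : Set (ℕ → U d)} (hB : MeasurableSet B) (k : ℕ) : ∀ y : V d,
    P0 d {ξ | walk y ξ k = 0 ∧ (fun j => ξ (j + k)) ∈ B} = ENNReal.ofReal (pr d k y) * P0 d B := by
  induction k with
  | zero =>
    intro y
    by_cases hy : y = 0
    · simp [pr, walk, hy]; rfl
    · simp [pr, walk, hy]
  | succ k ih =>
    intro y
    rw [P0_step]
    · have hd : (0 : ℝ) < 2 * d := by have := NeZero.pos d; positivity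
      rw [pr, ENNReal.ofReal_sum_of_nonneg
        (fun s _ => mul_nonneg (by positivity) (pr_nonneg _ _)), Finset.sum_mul]
      refine Finset.sum_congr rfl fun s _ => ?_
      rw [ENNReal.ofReal_mul (by positivity), ENNReal.ofReal_inv_of_pos hd, mul_assoc, ← ih]
      congr 2
      · rw [ENNReal.ofReal_mul (by norm_num)]; simp
      · ext ξ
        simp only [Set.mem_ofPred_eq]
        rw [walk_scons]
        rfl
    · refine MeasurableSet.inter ?_ ?_
      · exact ((measurable_pi_iff.1 (measurable_walk y)) (k+1)) (measSet_V {0})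
      · have : Measurable (fun (ξ : ℕ → U d) (j : ℕ) => ξ (j + (k+1))) :=
          measurable_pi_iff.2 fun j => measurable_pi_apply _
        exact this hB

lemma P0_ret [NeZero d] (k : ℕ) (y : V d) :
    P0 d {ξ | walk y ξ k = 0} = ENNReal.ofReal (pr d k y) := by
  have := P0_loop (d := d) MeasurableSet.univ k y
  simpa using this

/-- insertion/cut of a loop -/
def cutS (u k : ℕ) (ξ : ℕ → U d) : ℕ → U d := fun j => if j < u then ξ j else ξ (j + k)

lemma measurable_cutS (u k : ℕ) : Measurable (cutS u k : (ℕ → U d) → _) := by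
  rw [measurable_pi_iff]
  intro j
  by_cases h : j < u
  · simp only [cutS, h, if_true]; exact measurable_pi_apply _
  · simp only [cutS, h, if_false]; exact measurable_pi_apply _

lemma cutS_scons (u k : ℕ) (s : U d) (ξ : ℕ → U d) :
    cutS (u + 1) k (scons s ξ) = scons s (cutS u k ξ) := by
  funext j
  cases j with
  | zero => simp [cutS, scons]
  | succ j =>
    simp only [cutS, scons, Nat.add_lt_add_iff_right]
    rw [show j + 1 + k = (j + k) + 1 by ring]
  
lemma P0_cut [NeZero d] (k : ℕ) (u : ℕ) : ∀ (x : V d) {B : Set (ℕ → U d)} (_ : MeasurableSet B),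
    P0 d {ξ | walk x ξ u = walk x ξ (u + k) ∧ cutS u k ξ ∈ B} =
      ENNReal.ofReal (pr d k 0) * P0 d B := by
  induction u with
  | zero =>
    intro x B hB
    rw [← P0_loop hB]
    congr 1
    ext ξ
    simp only [Set.mem_ofPred_eq]
    have h1 : walk x ξ (0 + k) = x + walk 0 ξ k := by
      rw [zero_add, ← walk_translate, add_zero]
    have h2 : cutS 0 k ξ = fun j => ξ (j + k) := by funext j; simp [cutS]
    rw [h1, h2]
    simp [walk]
  | succ u ih =>
    intro x B hB
    rw [P0_step, P0_step hB, Finset.mul_sum]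
    · refine Finset.sum_congr rfl fun s _ => ?_
      rw [mul_left_comm]
      congr 1
      rw [← ih (x + ev s) (show MeasurableSet {ξ | scons s ξ ∈ B} from measurable_scons s hB)]
      congr 1
      ext ξ
      simp only [Set.mem_ofPred_eq]
      rw [cutS_scons, show u + 1 + k = (u + k) + 1 by ring, walk_scons, walk_scons]
    · refine MeasurableSet.inter ?_ (measurable_cutS _ _ hB)
      have hm := measurable_pi_iff.1 (measurable_walk x)
      exact measurableSet_eq_fun (hm _) (hm _)

/-- abstract summation bound -/
lemma pr_sum_le [NeZero d] (f g : V d → ℝ) (hg0 : ∀ x, 0 ≤ g x) (hf0 : ∀ x, 0 ≤ f x)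
    (hg : ∀ x, (∑ s : U d, (2 * (d : ℝ))⁻¹ * g (x + ev s)) + (if x = 0 then 1 else 0) ≤ g x)
    (hf : ∀ x, (∑ s : U d, (2 * (d : ℝ))⁻¹ * f (x + ev s)) + g x ≤ f x) (n : ℕ) :
    (∀ y, ∑ k ∈ Finset.range n, pr d k y ≤ g y) ∧
    (∀ y, ∑ k ∈ Finset.range n, ((k : ℝ) + 1) * pr d k y ≤ f y) := by
  have key : ∀ n, ∀ y, ∑ k ∈ Finset.range n, pr d k y ≤ g y := by
    intro n
    induction n with
    | zero => intro y; simpa using hg0 y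
    | succ n ih =>
      intro y
      rw [Finset.sum_range_succ']
      refine le_trans ?_ (hg y)
      refine add_le_add ?_ (le_of_eq rfl)
      simp only [pr]
      rw [Finset.sum_comm]
      refine Finset.sum_le_sum fun s _ => ?_
      rw [← Finset.mul_sum]
      exact mul_le_mul_of_nonneg_left (ih _) (by positivity)
  refine ⟨key n, ?_⟩
  induction n with
  | zero => intro y; simpa using hf0 y
  | succ n ih =>
    intro y
    have e : ∑ k ∈ Finset.range (n+1), ((k : ℝ) + 1) * pr d k y =
        (∑ k ∈ Finset.range n, ((k : ℝ) + 1) * pr d (k+1) y)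
          + ∑ k ∈ Finset.range (n+1), pr d k y := by
      simp only [add_mul, one_mul, Finset.sum_add_distrib]
      rw [Finset.sum_range_succ' (fun k => (k : ℝ) * pr d k y)]
      push_cast
      simp only [add_mul, one_mul, Finset.sum_add_distrib]
      ring
    rw [e]
    refine le_trans (add_le_add ?_ (key (n+1) y)) (hf y)
    simp only [pr, Finset.mul_sum]
    rw [Finset.sum_comm]
    refine Finset.sum_le_sum fun s _ => ?_
    refine le_trans (le_of_eq ?_) (mul_le_mul_of_nonneg_left (ih (y + ev s)) (by positivity))
    rw [Finset.mul_sum]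
    exact Finset.sum_congr rfl fun k _ => by ring

end Part3

section Part4

lemma poly_aux1 (e : ℝ) (h : |e| ≤ 3/1000) : 1 ≤ (1 - 1/4*e + 1/4*e^2)^4 * (1+e)^1 := by
  obtain ⟨h1, h2⟩ := abs_le.1 h
  have hs := sq_nonneg e
  have a1 : 1 - 1/2*e + 56/100*e^2 ≤ (1 - 1/4*e + 1/4*e^2)^2 := by
    nlinarith [mul_nonneg hs (sub_nonneg.2 h2), mul_nonneg hs hs]
  have a2 : 1 - e + 136/100*e^2 ≤ (1 - 1/2*e + 56/100*e^2)^2 := by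
    nlinarith [mul_nonneg hs (sub_nonneg.2 h2), mul_nonneg hs hs]
  have a3 : 0 ≤ 1 - 1/2*e + 56/100*e^2 := by nlinarith
  have a4 : (1 - 1/2*e + 56/100*e^2)^2 ≤ (1 - 1/4*e + 1/4*e^2)^4 := by
    calc _ ≤ ((1 - 1/4*e + 1/4*e^2)^2)^2 := pow_le_pow_left₀ a3 a1 2
      _ = _ := by ring
  have a5 : 1 ≤ (1 - e + 136/100*e^2) * (1+e)^1 := by
    nlinarith [mul_nonneg hs (sub_nonneg.2 h2), mul_nonneg hs (by linarith : 0 ≤ e + 3/1000), mul_nonneg hs hs]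
  exact a5.trans (mul_le_mul_of_nonneg_right (a2.trans a4) (by rw [pow_one]; linarith))

lemma poly_aux2 (e : ℝ) (h : |e| ≤ 3/1000) : 1 ≤ (1 - 5/4*e + 3/2*e^2)^4 * (1+e)^5 := by
  obtain ⟨h1, h2⟩ := abs_le.1 h
  have hs := sq_nonneg e
  have m1 := mul_nonneg hs (sub_nonneg.2 h2)
  have m2 := mul_nonneg hs (by linarith : 0 ≤ e + 3/1000)
  have m3 := mul_nonneg hs hs
  have a1 : 1 - 5/2*e + 455/100*e^2 ≤ (1 - 5/4*e + 3/2*e^2)^2 := by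
    nlinarith
  have a2 : 1 - 5*e + 1527/100*e^2 ≤ (1 - 5/2*e + 455/100*e^2)^2 := by
    nlinarith
  have a3 : 0 ≤ 1 - 5/2*e + 455/100*e^2 := by nlinarith
  have a4 : (1 - 5/2*e + 455/100*e^2)^2 ≤ (1 - 5/4*e + 3/2*e^2)^4 := by
    calc _ ≤ ((1 - 5/4*e + 3/2*e^2)^2)^2 := pow_le_pow_left₀ a3 a1 2
      _ = _ := by ring
  have b1 : 1 + 2 * e + e^2 = (1+e)^2 := by ring
  have b2 : 1 + 4*e + 598/100*e^2 ≤ (1+e)^4 := by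
    nlinarith
  have b3 : 1 + 5*e + 995/100*e^2 ≤ (1+e)^5 := by
    have : (1 + 4*e + 598/100*e^2) * (1+e) ≤ (1+e)^4 * (1+e) :=
      mul_le_mul_of_nonneg_right b2 (by linarith)
    nlinarith
  have b4 : 0 ≤ (1+e)^5 := by have : 0 ≤ 1 + e := by linarith
                              positivity
  have c0 : 0 ≤ 1 - 5*e + 1527/100*e^2 := by nlinarith
  have a5 : 1 ≤ (1 - 5*e + 1527/100*e^2) * (1 + 5*e + 995/100*e^2) := by
    nlinarith
  calc (1:ℝ) ≤ _ := a5
    _ ≤ (1 - 5*e + 1527/100*e^2) * (1+e)^5 := mul_le_mul_of_nonneg_left b3 c0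
    _ ≤ _ := mul_le_mul_of_nonneg_right (a2.trans a4) b4

lemma rpow_aux (z b : ℝ) (m : ℕ) (hz : 0 < z) (hb : 0 ≤ b) (h : 1 ≤ b^4 * z^m) :
    z ^ (-((m : ℝ)/4)) ≤ b := by
  refine le_of_pow_le_pow_left₀ (n := 4) (by norm_num) hb ?_
  rw [← Real.rpow_natCast, ← Real.rpow_mul hz.le]
  have : (-((m : ℝ)/4)) * ((4 : ℕ) : ℝ) = -(m : ℝ) := by push_cast; ring
  rw [this, Real.rpow_neg hz.le, Real.rpow_natCast, inv_le_iff_one_le_mul₀ (by positivity)]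
  exact h

noncomputable def Rf (x : V d) : ℝ := 1000000 + ∑ i, ((x i : ℝ))^2

lemma Rf_ge (x : V d) : 1000000 ≤ Rf x := by
  unfold Rf
  have : 0 ≤ ∑ i, ((x i : ℝ))^2 := Finset.sum_nonneg fun _ _ => sq_nonneg _
  linarith

lemma Rf_coord (x : V d) (i : Fin d) : (x i : ℝ)^2 ≤ Rf x := by
  unfold Rf
  have := Finset.single_le_sum (f := fun i => (x i : ℝ)^2) (fun _ _ => sq_nonneg _) (Finset.mem_univ i)
  linarith

lemma Rf_step (x : V d) (i : Fin d) (b : Bool) :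
    Rf (x + ev (i, b)) = Rf x + 1 + (if b then 1 else -1) * 2 * x i := by
  unfold Rf
  rw [← Finset.add_sum_erase _ _ (Finset.mem_univ i),
    ← Finset.add_sum_erase (a := i) Finset.univ (fun i => ((x i : ℝ))^2) (Finset.mem_univ i)]
  have : ∑ j ∈ Finset.univ.erase i, (((x + ev (i, b)) j : ℤ) : ℝ)^2 =
      ∑ j ∈ Finset.univ.erase i, ((x j : ℝ))^2 := by
    refine Finset.sum_congr rfl fun j hj => ?_
    simp [ev, (Finset.mem_erase.1 hj).1]
  rw [this]
  cases b <;> simp [ev] <;> ring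

lemma eps_small (R y : ℝ) (hR : 1000000 ≤ R) (hy : y^2 ≤ R) : |(1 + 2*y)/R| ≤ 3/1000 := by
  have h1 : |y| ≤ R / 1000 := by
    apply abs_le_of_sq_le_sq _ (by positivity)
    nlinarith
  rw [abs_div, abs_of_pos (by linarith : 0 < R), div_le_iff₀ (by linarith)]
  have := abs_le.1 h1
  rw [abs_le]
  constructor <;> linarith

lemma superharm (hd : 5 ≤ d) (β κ : ℝ) (hκ : 0 ≤ κ)
    (H : ∀ e : ℝ, |e| ≤ 3/1000 → (1+e)^(-β) ≤ 1 - β*e + κ*e^2) (c : ℝ) 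
    (hc : c ≤ β - 4*κ/5 - κ/1000000) (x : V d) :
    (∑ s : U d, (2 * (d : ℝ))⁻¹ * (Rf (x + ev s))^(-β)) + c * (Rf x)^(-β-1) ≤ (Rf x)^(-β) := by
  have hR := Rf_ge x
  set R := Rf x with hRdef
  have hR0 : 0 < R := by linarith
  have hd0 : (5 : ℝ) ≤ d := by exact_mod_cast hd
  have hone : ∀ (i : Fin d) (b : Bool), (Rf (x + ev (i,b)))^(-β) ≤
      R^(-β) * (1 - β*((1 + (if b then 1 else -1) * 2 * x i)/R)
        + κ*((1 + (if b then 1 else -1) * 2 * x i)/R)^2) := by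
    intro i b
    have hs : |(1 + (if b then 1 else -1) * 2 * (x i : ℝ))/R| ≤ 3/1000 := by
      have := eps_small R ((if b then 1 else -1) * x i) hR (by
        have := Rf_coord x i
        cases b <;> simpa using this)
      convert this using 4
      ring
    have hz := (abs_le.1 hs).1
    rw [Rf_step, ← hRdef]
    have e1 : R + 1 + (if b then 1 else -1) * 2 * (x i : ℝ) =
        R * (1 + (1 + (if b then 1 else -1) * 2 * (x i : ℝ))/R) := by
      field_simp
      ring
    rw [e1, Real.mul_rpow hR0.le (by linarith)]
    exact mul_le_mul_of_nonneg_left (H _ hs) (by positivity)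
  have hpair : ∀ i : Fin d, ∑ b : Bool, (Rf (x + ev (i,b)))^(-β) ≤
      R^(-β) * (2 - 2*β/R + κ*(2 + 8*(x i : ℝ)^2)/R^2) := by
    intro i
    rw [Fintype.sum_bool]
    refine (add_le_add (hone i true) (hone i false)).trans (le_of_eq ?_)
    simp only [if_true, Bool.false_eq_true, if_false]
    field_simp
    ring
  have hsum : ∑ s : U d, (Rf (x + ev s))^(-β) ≤
      R^(-β) * (2*d - 2*d*β/R + κ*(2*d + 8*(R - 1000000))/R^2) := by
    rw [Fintype.sum_prod_type]
    refine (Finset.sum_le_sum fun i _ => hpair i).trans (le_of_eq ?_)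
    have : R - 1000000 = ∑ i, (x i : ℝ)^2 := by rw [hRdef, Rf]; ring
    rw [this, ← Finset.mul_sum]
    congr 1
    rw [Finset.sum_add_distrib, ← Finset.sum_div, ← Finset.mul_sum, Finset.sum_add_distrib,
      ← Finset.mul_sum]
    simp
    ring
  rw [← Finset.mul_sum]
  have hstep := mul_le_mul_of_nonneg_left hsum (by positivity : 0 ≤ (2*(d:ℝ))⁻¹)
  have hpow : R^(-β-1) = R^(-β) / R := by rw [Real.rpow_sub hR0, Real.rpow_one]
  rw [hpow]
  have hu : 0 < R^(-β) := by positivity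
  have hfin : (2*(d:ℝ))⁻¹ * (2*d - 2*d*β/R + κ*(2*d + 8*(R - 1000000))/R^2) + c / R ≤ 1 := by
    have e1 : (2*(d:ℝ))⁻¹ * (2*d - 2*d*β/R + κ*(2*d + 8*(R - 1000000))/R^2) + c / R
       = 1 - (β - c - κ / R - 4*κ/d * ((R-1000000)/R)) / R := by
      field_simp
      ring
    rw [e1]
    have h1 : κ / R ≤ κ / 1000000 := by gcongr
    have h2 : 4*κ/d ≤ 4*κ/5 := by gcongr
    have h3 : 4*κ/d * ((R-1000000)/R) ≤ 4*κ/d * 1 := by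
      gcongr
      rw [div_le_one hR0]; linarith
    have h4 : 0 ≤ (β - c - κ / R - 4*κ/d * ((R-1000000)/R)) / R := by
      apply div_nonneg _ hR0.le
      linarith
    linarith
  calc _ ≤ (2*(d:ℝ))⁻¹ * (R^(-β) * (2*d - 2*d*β/R + κ*(2*d + 8*(R - 1000000))/R^2))
        + c * (R^(-β) / R) := by linarith
    _ = R^(-β) * ((2*(d:ℝ))⁻¹ * (2*d - 2*d*β/R + κ*(2*d + 8*(R - 1000000))/R^2) + c / R) := by ring
    _ ≤ R^(-β) * 1 := mul_le_mul_of_nonneg_left hfin hu.le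
    _ = _ := mul_one _

lemma pr_bounds (hd : 5 ≤ d) : ∃ K : ℝ, 0 ≤ K ∧ ∀ (n : ℕ) (y : V d),
    (∑ k ∈ Finset.range n, pr d k y ≤ K) ∧ (∑ k ∈ Finset.range n, ((k : ℝ) + 1) * pr d k y ≤ K) := by
  have : NeZero d := ⟨by omega⟩
  have s1 : ∀ x : V d, _ := superharm (d := d) hd (1/4) (1/4) (by norm_num) (by
    intro e he
    have hz := abs_le.1 he
    have := rpow_aux (1+e) (1 - 1/4*e + 1/4*e^2) 1 (by linarith) (by nlinarith [hz.1, hz.2]) (poly_aux1 e he)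
    simpa using this) (4/100) (by norm_num)
  have s2 : ∀ x : V d, _ := superharm (d := d) hd (5/4) (3/2) (by norm_num) (by
    intro e he
    have hz := abs_le.1 he
    have := rpow_aux (1+e) (1 - 5/4*e + 3/2*e^2) 5 (by linarith) (by nlinarith [hz.1, hz.2]) (poly_aux2 e he)
    simpa using this) (4/100) (by norm_num)
  have pos : ∀ x : V d, 0 < Rf x := fun x => by have := Rf_ge x; linarith
  set A : ℝ := 25 * (1000000:ℝ)^(9/4 : ℝ) with hA
  have hA0 : 0 < A := by positivity
  have key := fun n => pr_sum_le (d := d) (fun x => 25 * A * Rf x ^ (-(1/4) : ℝ)) (fun x => A * Rf x ^ (-(5/4) : ℝ))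
    (fun x => by have := pos x; positivity) (fun x => by have := pos x; positivity)
    (by
      intro x
      have h := mul_le_mul_of_nonneg_left (s2 x) hA0.le
      refine le_trans ?_ h
      rw [mul_add, Finset.mul_sum]
      refine add_le_add (le_of_eq (Finset.sum_congr rfl fun s _ => by ring)) ?_
      split_ifs with hx
      · subst hx
        have : Rf (0 : V d) = 1000000 := by simp [Rf]
        rw [this, hA]
        have : (1000000:ℝ)^(9/4 : ℝ) * (1000000:ℝ)^(-(5/4) - 1 : ℝ) = 1 := by
          rw [← Real.rpow_add (by norm_num)]; norm_num
        nlinarith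
      · have := pos x; positivity)
    (by
      intro x
      have h := mul_le_mul_of_nonneg_left (s1 x) (by positivity : 0 ≤ 25 * A)
      refine le_trans ?_ h
      rw [mul_add, Finset.mul_sum]
      refine add_le_add (le_of_eq (Finset.sum_congr rfl fun s _ => by ring)) (le_of_eq ?_)
      rw [show (-(5/4) : ℝ) = -(1/4) - 1 by norm_num]
      ring) n
  have le1 : ∀ (x : V d) (b : ℝ), 0 ≤ b → Rf x ^ (-b) ≤ 1 := fun x b hb =>
    Real.rpow_le_one_of_one_le_of_nonpos (by have := Rf_ge x; linarith) (by linarith)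
  refine ⟨25 * A, by positivity, fun n y => ⟨?_, ?_⟩⟩
  · refine ((key n).1 y).trans ?_
    have := le1 y (5/4) (by norm_num)
    nlinarith
  · refine ((key n).2 y).trans ?_
    have := le1 y (1/4) (by norm_num)
    nlinarith

end Part4

section Part5

lemma inv_ofReal [NeZero d] : (2 * (d : ℝ≥0∞))⁻¹ = ENNReal.ofReal ((2 * (d:ℝ))⁻¹) := by
  have hd : (0 : ℝ) < 2 * d := by have := NeZero.pos d; positivity
  rw [ENNReal.ofReal_inv_of_pos hd, ENNReal.ofReal_mul (by norm_num)]; simp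

lemma meas_walk_apply (x : V d) (j : ℕ) : Measurable (fun ξ : ℕ → U d => walk x ξ j) :=
  measurable_pi_iff.1 (measurable_walk x) j

lemma meas_exists_hit (x : V d) (t : ℕ) (H : Set (V d)) :
    MeasurableSet {ξ : ℕ → U d | ∃ j ≤ t, walk x ξ j ∈ H} := by
  have : {ξ : ℕ → U d | ∃ j ≤ t, walk x ξ j ∈ H} =
      ⋃ j, ⋃ (_ : j ≤ t), (fun ξ : ℕ → U d => walk x ξ j) ⁻¹' H := by ext; simp
  rw [this]
  exact MeasurableSet.iUnion fun j => MeasurableSet.iUnion fun _ => meas_walk_apply x j (measSet_V H)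

lemma exp_pair (θ σ : ℝ) (hσ : σ = 1 ∨ σ = -1) (i j : Fin d) :
    ∑ b : Bool, Real.exp (θ * (σ * (ev (j, b) i : ℝ))) ≤ 2 * Real.cosh θ := by
  rw [Fintype.sum_bool, Real.cosh_eq]
  by_cases h : i = j
  · rcases hσ with rfl | rfl <;> simp [ev, h] <;> linarith
  · have := Real.one_le_cosh θ
    rw [Real.cosh_eq] at this
    simp [ev, h]
    linarith

lemma hit_bound_one [NeZero d] (i : Fin d) (θ σ N : ℝ) (hθ : 0 ≤ θ) (hσ : σ = 1 ∨ σ = -1) (t : ℕ) :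
    ∀ x : V d, P0 d {ξ | ∃ j ≤ t, walk x ξ j ∈ {y : V d | N ≤ σ * (y i : ℝ)}} ≤
      ENNReal.ofReal (Real.exp (θ * (σ * (x i : ℝ) - N)) * Real.cosh θ ^ t) := by
  have triv : ∀ (t : ℕ) (x : V d), N ≤ σ * (x i : ℝ) → ∀ B : Set (ℕ → U d), P0 d B ≤
      ENNReal.ofReal (Real.exp (θ * (σ * (x i : ℝ) - N)) * Real.cosh θ ^ t) := by
    intro t x hx B
    refine prob_le_one.trans ?_
    rw [ENNReal.one_le_ofReal]
    have h1 : 1 ≤ Real.exp (θ * (σ * (x i : ℝ) - N)) :=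
      Real.one_le_exp (mul_nonneg hθ (by linarith))
    have h2 : 1 ≤ Real.cosh θ ^ t := one_le_pow₀ (Real.one_le_cosh θ)
    exact one_le_mul_of_one_le_of_one_le h1 h2
  induction t with
  | zero =>
    intro x
    by_cases hx : N ≤ σ * (x i : ℝ)
    · exact triv 0 x hx _
    · have : {ξ : ℕ → U d | ∃ j ≤ 0, walk x ξ j ∈ {y : V d | N ≤ σ * (y i : ℝ)}} = ∅ := by
        ext ξ
        simpa [walk] using hx
      rw [this, measure_empty]
      exact bot_le
  | succ t ih =>
    intro x
    by_cases hx : N ≤ σ * (x i : ℝ)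
    · exact triv _ x hx _
    rw [P0_step (meas_exists_hit _ _ _)]
    calc _ ≤ ∑ s : U d, (2 * (d : ℝ≥0∞))⁻¹ * ENNReal.ofReal
          (Real.exp (θ * (σ * ((x + ev s) i : ℝ) - N)) * Real.cosh θ ^ t) := by
          refine Finset.sum_le_sum fun s _ => ?_
          gcongr
          refine le_trans (measure_mono ?_) (ih (x + ev s))
          rintro ξ ⟨j, hj, hjs⟩
          cases j with
          | zero => exact absurd hjs hx
          | succ j => rw [walk_scons] at hjs; exact ⟨j, by omega, hjs⟩
      _ = ENNReal.ofReal (∑ s : U d, (2 * (d : ℝ))⁻¹ *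
          (Real.exp (θ * (σ * ((x + ev s) i : ℝ) - N)) * Real.cosh θ ^ t)) := by
          rw [ENNReal.ofReal_sum_of_nonneg (fun s _ => by positivity)]
          refine Finset.sum_congr rfl fun s _ => ?_
          rw [inv_ofReal, ← ENNReal.ofReal_mul (by positivity)]
      _ ≤ _ := by
          apply ENNReal.ofReal_le_ofReal
          have hd : (0 : ℝ) < d := by have := NeZero.pos d; positivity
          have e : ∀ s : U d, (2 * (d : ℝ))⁻¹ *
              (Real.exp (θ * (σ * ((x + ev s) i : ℝ) - N)) * Real.cosh θ ^ t) =
              ((2 * (d : ℝ))⁻¹ * Real.exp (θ * (σ * (x i : ℝ) - N)) * Real.cosh θ ^ t) *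
                Real.exp (θ * (σ * (ev s i : ℝ))) := by
            intro s
            have : θ * (σ * ((x + ev s) i : ℝ) - N) =
              θ * (σ * (x i : ℝ) - N) + θ * (σ * (ev s i : ℝ)) := by
              simp only [Pi.add_apply]; push_cast; ring
            rw [this, Real.exp_add]; ring
          rw [Finset.sum_congr rfl fun s _ => e s, ← Finset.mul_sum, Fintype.sum_prod_type]
          have h3 : ∑ j : Fin d, ∑ b : Bool, Real.exp (θ * (σ * (ev (j, b) i : ℝ))) ≤
              d * (2 * Real.cosh θ) := by
            refine (Finset.sum_le_sum fun j _ => exp_pair θ σ hσ i j).trans (le_of_eq ?_)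
            simp
          refine (mul_le_mul_of_nonneg_left h3 (by have := Real.cosh_pos θ; positivity)).trans (le_of_eq ?_)
          rw [pow_succ]
          field_simp

lemma hit_bound [NeZero d] (N : ℕ) (θ : ℝ) (hθ : 0 ≤ θ) (t : ℕ) :
    P0 d {ξ | ∃ j ≤ t, ∃ i, (N : ℤ) ≤ |walk 0 ξ j i|} ≤
      ENNReal.ofReal (2 * d * (Real.exp (- θ * N) * Real.cosh θ ^ t)) := by
  have hsub : {ξ : ℕ → U d | ∃ j ≤ t, ∃ i, (N : ℤ) ≤ |walk 0 ξ j i|} ⊆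
      ⋃ s : U d, {ξ | ∃ j ≤ t, walk 0 ξ j ∈ {y : V d | (N:ℝ) ≤ (if s.2 then 1 else -1 : ℝ) * (y s.1 : ℝ)}} := by
    rintro ξ ⟨j, hj, i, hi⟩
    rw [Set.mem_iUnion]
    rcases le_abs.1 hi with h | h
    · exact ⟨(i, true), j, hj, by simp; exact_mod_cast h⟩
    · refine ⟨(i, false), j, hj, ?_⟩
      have : ((N:ℤ):ℝ) ≤ ((-walk 0 ξ j i : ℤ) : ℝ) := by exact_mod_cast h
      simp
      push_cast at this
      exact this
  refine (measure_mono hsub).trans ((measure_iUnion_le _).trans ?_)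
  rw [tsum_fintype]
  refine (Finset.sum_le_sum fun s _ => hit_bound_one s.1 θ (if s.2 then 1 else -1) N hθ
    (by cases s.2 <;> simp) t 0).trans ?_
  simp only [Pi.zero_apply, Int.cast_zero, mul_zero, zero_sub, mul_neg]
  rw [Finset.sum_const, nsmul_eq_mul, neg_mul, ENNReal.ofReal_mul (by positivity : (0:ℝ) ≤ 2 * d)]
  apply le_of_eq
  congr 1
  rw [ENNReal.ofReal_mul (by norm_num)]; simp [mul_comm]

lemma transient (hd : 5 ≤ d) [NeZero d] : ∀ᵐ ξ ∂(P0 d), ∀ x : V d, {j | walk 0 ξ j = x}.Finite := by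
  rw [ae_all_iff]
  intro x
  obtain ⟨K, hK0, hK⟩ := pr_bounds hd
  have h0 : ∀ j, P0 d {ξ | walk 0 ξ j = x} = ENNReal.ofReal (pr d j (-x)) := by
    intro j
    rw [← P0_ret]
    congr 1
    ext ξ
    have := walk_translate (-x) 0 ξ j
    rw [add_zero] at this
    simp only [Set.mem_ofPred_eq]
    rw [this, neg_add_eq_zero, eq_comm]
  have hsum : ∑' j, P0 d {ξ | walk 0 ξ j = x} ≠ ∞ := by
    simp only [h0]
    have hs : Summable fun j => pr d j (-x) :=
      summable_of_sum_range_le (fun j => pr_nonneg j _) (fun n => (hK n (-x)).1)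
    rw [← ENNReal.ofReal_tsum_of_nonneg (fun j => pr_nonneg j _) hs]
    exact ENNReal.ofReal_ne_top
  have := ae_finite_setOfPred_mem hsum
  filter_upwards [this] with ξ hξ
  exact hξ

end Part5

section Part6

lemma stopAt_of_prefix (D : Set (V d)) (ω : ℕ → V d) (j : ℕ) (h : ∀ i < j, ω i ∈ D) :
    stopAt D ω j = ω j := by
  unfold stopAt
  rw [if_pos]
  unfold exitTimeE
  split_ifs with hex
  · have := (Nat.le_find_iff hex j).2 (fun m hm => by simpa using h m hm)
    exact_mod_cast this
  · exact le_top

lemma stopAt_of_not_prefix (D : Set (V d)) (ω : ℕ → V d) (j : ℕ) (h : ¬ ∀ i < j, ω i ∈ D) :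
    stopAt D ω j ∉ D ∧ stopAt D ω j = ω (exitTime D ω) := by
  push Not at h
  obtain ⟨i, hi, hiD⟩ := h
  have hex : ∃ j, ω j ∉ D := ⟨i, hiD⟩
  have hlt : Nat.find hex < j := lt_of_le_of_lt (Nat.find_min' hex hiD) hi
  have h1 : exitTimeE D ω = (Nat.find hex : ENat) := by unfold exitTimeE; rw [dif_pos hex]
  have h2 : exitTime D ω = Nat.find hex := by unfold exitTime; rw [h1]; rfl
  have h3 : stopAt D ω j = ω (exitTime D ω) := by
    unfold stopAt
    rw [if_neg]
    rw [h1]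
    simpa using hlt
  refine ⟨?_, h3⟩
  rw [h3, h2]
  exact Nat.find_spec hex

lemma stopAt_mem (D : Set (V d)) (ω : ℕ → V d) (j : ℕ) (h : stopAt D ω j ∈ D) :
    ∀ i ≤ j, ω i ∈ D := by
  by_cases hp : ∀ i < j, ω i ∈ D
  · intro i hi
    rcases hi.lt_or_eq with hi | rfl
    · exact hp i hi
    · rwa [stopAt_of_prefix D ω i hp] at h
  · exact absurd h (stopAt_of_not_prefix D ω j hp).1

lemma stopAt_eq_of_mem (D : Set (V d)) (ω : ℕ → V d) (j : ℕ) (h : stopAt D ω j ∈ D) :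
    stopAt D ω j = ω j :=
  stopAt_of_prefix D ω j fun i hi => stopAt_mem D ω j h i hi.le

lemma stopAt_succ (D : Set (V d)) (ω : ℕ → V d) (j : ℕ) :
    stopAt D ω (j + 1) = if stopAt D ω j ∈ D then ω (j + 1) else stopAt D ω j := by
  split_ifs with h
  · exact stopAt_of_prefix D ω (j+1) fun i hi => stopAt_mem D ω j h i (by omega)
  · have hn : ¬ ∀ i < j + 1, ω i ∈ D := by
      intro hall
      rw [stopAt_of_prefix D ω j (fun i hi => hall i (by omega))] at h
      exact h (hall j (by omega))
    have h1 := (stopAt_of_not_prefix D ω (j+1) hn).2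
    by_cases hp : ∀ i < j, ω i ∈ D
    · rw [h1]
      have hj := stopAt_of_prefix D ω j hp
      rw [hj] at h ⊢
      have hex : ∃ j, ω j ∉ D := ⟨j, h⟩
      have : Nat.find hex = j := by
        rw [Nat.find_eq_iff]
        exact ⟨h, fun m hm => by simpa using hp m hm⟩
      have h2 : exitTime D ω = Nat.find hex := by
        unfold exitTime exitTimeE; rw [dif_pos hex]; rfl
      rw [h2, this]
    · rw [h1, (stopAt_of_not_prefix D ω j hp).2]

lemma stopAt_zero (D : Set (V d)) (ω : ℕ → V d) : stopAt D ω 0 = ω 0 :=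
  stopAt_of_prefix D ω 0 (by simp)

/-- start time of the i-th loop -/
noncomputable def stT (η : ℕ → V d) : ℕ → ℕ
  | 0 => 0
  | i + 1 => leTime η i + 1

lemma leTime_eq (η : ℕ → V d) (i : ℕ) : leTime η i = lastVisit η (stT η i) := by
  cases i <;> rfl

lemma lastVisit_spec (η : ℕ → V d) (t : ℕ) (h : {j | t ≤ j ∧ η j = η t}.Finite) :
    t ≤ lastVisit η t ∧ η (lastVisit η t) = η t ∧ ∀ j, t ≤ j → η j = η t → j ≤ lastVisit η t := by
  have hne : {j | t ≤ j ∧ η j = η t}.Nonempty := ⟨t, le_rfl, rfl⟩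
  have := Nat.sSup_mem hne h.bddAbove
  exact ⟨this.1, this.2, fun j hj hjt => le_csSup h.bddAbove ⟨hj, hjt⟩⟩

lemma lastVisit_eq (η : ℕ → V d) (t m : ℕ) (h1 : t ≤ m) (h2 : η m = η t)
    (h3 : ∀ j, t ≤ j → η j = η t → j ≤ m) : lastVisit η t = m := by
  apply le_antisymm
  · exact csSup_le ⟨t, le_rfl, rfl⟩ (fun j hj => h3 j hj.1 hj.2)
  · exact le_csSup ⟨m, fun j hj => h3 j hj.1 hj.2⟩ ⟨h1, h2⟩

def Valid (η : ℕ → V d) (i : ℕ) : Prop :=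
  stT η i ≤ leTime η i ∧ η (leTime η i) = η (stT η i) ∧
    ∀ j, stT η i ≤ j → η j = η (stT η i) → j ≤ leTime η i

lemma leTime_lt (η : ℕ → V d) (n : ℕ) (hv : ∀ i ≤ n, Valid η i) (i : ℕ) (hi : i ≤ n) :
    ∀ j < i, leTime η j < stT η i := by
  induction i with
  | zero => intro j hj; omega
  | succ i ih =>
    intro j hj
    have h1 : stT η (i+1) = leTime η i + 1 := rfl
    rcases Nat.lt_succ_iff_lt_or_eq.1 hj with h | rfl
    · have := ih (by omega) j h
      have := (hv i (by omega)).1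
      omega
    · omega

lemma leTime_sum (η : ℕ → V d) (n : ℕ) (hv : ∀ i ≤ n, Valid η i) :
    leTime η n = ∑ i ∈ Finset.range (n+1), (leTime η i - stT η i) + n := by
  induction n with
  | zero => simp [stT]
  | succ n ih =>
    rw [Finset.sum_range_succ]
    have := ih (fun i hi => hv i (by omega))
    have h1 : stT η (n+1) = leTime η n + 1 := rfl
    have := (hv (n+1) le_rfl).1
    omega

def IsCut (u k : ℕ) (η η' : ℕ → V d) : Prop :=
  (∀ j ≤ u, η' j = η j) ∧ (∀ j, u ≤ j → η' j = η (j + k))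

lemma cut_leTime (u k n i : ℕ) (η η' : ℕ → V d) (hc : IsCut u k η η') (hi : i ≤ n)
    (hv : ∀ i ≤ n, Valid η i) (hu : stT η i = u) (hk : leTime η i = u + k) :
    ∀ j ≤ n, (j < i → leTime η' j = leTime η j) ∧ (i ≤ j → leTime η' j + k = leTime η j) := by
  obtain ⟨c1, c2⟩ := hc
  intro j
  induction j with
  | zero =>
    intro hj
    obtain ⟨v1, v2, v3⟩ := hv 0 hj
    have s0 : stT η 0 = 0 := rfl
    rw [s0] at v1 v2 v3
    constructor
    · intro h0
      have hlt := leTime_lt η n hv i hi 0 h0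
      rw [hu] at hlt
      apply lastVisit_eq
      · omega
      · rw [c1 _ hlt.le, c1 _ (by omega), v2]
      · intro m _ hm
        rw [c1 0 (by omega)] at hm
        by_cases hmu : m ≤ u
        · rw [c1 m hmu] at hm; exact v3 m (by omega) hm
        · rw [c2 m (by omega)] at hm
          have := v3 (m+k) (by omega) hm
          omega
    · intro h0
      have : i = 0 := by omega
      subst this
      have hu0 : u = 0 := by rw [← hu]; rfl
      subst hu0
      have : leTime η' 0 = 0 := by
        apply lastVisit_eq
        · omega
        · rfl
        · intro m _ hm
          rw [c2 m (by omega), c1 0 (by omega)] at hm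
          have := v3 (m+k) (by omega) hm
          omega
      omega
  | succ j ih =>
    intro hj
    obtain ⟨ih1, ih2⟩ := ih (by omega)
    obtain ⟨v1, v2, v3⟩ := hv (j+1) hj
    have s0 : stT η (j+1) = leTime η j + 1 := rfl
    constructor
    · intro h0
      have e := ih1 (by omega)
      have hlt := leTime_lt η n hv i hi (j+1) h0
      rw [hu] at hlt
      have : leTime η' (j+1) = lastVisit η' (stT η (j+1)) := by
        rw [leTime, s0, e]
      rw [this]
      apply lastVisit_eq
      · exact v1
      · rw [c1 _ hlt.le, c1 _ (by omega), v2]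
      · intro m hm1 hm
        rw [c1 (stT η (j+1)) (by omega)] at hm
        by_cases hmu : m ≤ u
        · rw [c1 m hmu] at hm; exact v3 m (by omega) hm
        · rw [c2 m (by omega)] at hm
          have := v3 (m+k) (by omega) hm
          omega
    · intro h0
      rcases h0.lt_or_eq with h0 | h0
      · have e := ih2 (by omega)
        have hle : u + k ≤ leTime η j := by
          rcases (Nat.lt_succ_iff.1 h0).lt_or_eq with h | h
          · have a1 := leTime_lt η n hv j (by omega) i h
            have a2 := (hv j (by omega)).1
            omega
          · rw [← h, hk]
        have : leTime η' (j+1) = leTime η (j+1) - k := by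
          rw [leTime]
          apply lastVisit_eq
          · omega
          · rw [c2 _ (by omega), c2 _ (by omega)]
            rw [show leTime η (j+1) - k + k = leTime η (j+1) by omega,
              show leTime η' j + 1 + k = stT η (j+1) by omega, v2]
          · intro m hm1 hm
            rw [c2 _ (by omega), c2 _ (by omega),
              show leTime η' j + 1 + k = stT η (j+1) by omega] at hm
            have := v3 (m+k) (by omega) hm
            omega
        omega
      · subst h0
        have e := ih1 (by omega)
        have : leTime η' (j+1) = u := by
          rw [leTime, e, ← s0, hu]
          apply lastVisit_eq
          · omega
          · rfl
          · intro m hm1 hm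
            rw [c2 _ hm1, c1 _ le_rfl, ← hu] at hm
            have := v3 (m+k) (by omega) hm
            omega
        omega

/-- `n` is the first index at which the erased path hits `A` -/
def FirstHit (A : Set (V d)) (η : ℕ → V d) (n : ℕ) : Prop :=
  infLoopErase η n ∈ A ∧ ∀ j < n, infLoopErase η j ∉ A

lemma cut_firstHit (A : Set (V d)) (u k n i : ℕ) (η η' : ℕ → V d) (hc : IsCut u k η η') (hi : i ≤ n)
    (hv : ∀ i ≤ n, Valid η i) (hu : stT η i = u) (hk : leTime η i = u + k) (hF : FirstHit A η n) :
    FirstHit A η' n ∧ stT η' i = u ∧ leTime η' i = u := by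
  have key := cut_leTime u k n i η η' hc hi hv hu hk
  have hL : ∀ j ≤ n, infLoopErase η' j = infLoopErase η j := by
    intro j hj
    unfold infLoopErase
    by_cases h : j < i
    · have e := (key j hj).1 h
      have := leTime_lt η n hv i hi j h
      rw [e, hc.1 _ (by omega)]
    · have e := (key j hj).2 (by omega)
      have : u + k ≤ leTime η j := by
        rcases (not_lt.1 h).lt_or_eq with h | h
        · have a1 := leTime_lt η n hv j hj i h
          have a2 := (hv j hj).1
          omega
        · rw [← h, hk]
      rw [hc.2 _ (by omega), e]
  refine ⟨⟨by rw [hL n le_rfl]; exact hF.1, fun j hj => by rw [hL j hj.le]; exact hF.2 j hj⟩, ?_, ?_⟩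
  · rw [← hu]
    cases i with
    | zero => rfl
    | succ i => change leTime η' i + 1 = leTime η i + 1
                rw [(key i (by omega)).1 (by omega)]
  · have := (key i hi).2 le_rfl
    omega

lemma stopAt_cut (D : Set (V d)) (u k : ℕ) (ω ω' : ℕ → V d) (hc : IsCut u k ω ω')
    (hD : ∀ i ≤ u + k, ω i ∈ D) : IsCut u k (stopAt D ω) (stopAt D ω') := by
  have h1 : ∀ j ≤ u, stopAt D ω' j = stopAt D ω j := by
    intro j hj
    rw [stopAt_of_prefix, stopAt_of_prefix, hc.1 j hj]
    · exact fun i hi => hD i (by omega)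
    · exact fun i hi => by rw [hc.1 i (by omega)]; exact hD i (by omega)
  refine ⟨h1, ?_⟩
  intro j hj
  induction j, hj using Nat.le_induction with
  | base =>
    rw [h1 u le_rfl, stopAt_of_prefix, stopAt_of_prefix, ← hc.1 u le_rfl, hc.2 u le_rfl]
    · exact fun i hi => hD i (by omega)
    · exact fun i hi => hD i (by omega)
  | succ j hj ih =>
    rw [show j + 1 + k = (j + k) + 1 by ring, stopAt_succ, stopAt_succ, ih, hc.2 (j+1) (by omega),
      show j + 1 + k = (j + k) + 1 by ring]

lemma walk_cut (u k : ℕ) (ξ : ℕ → U d) (h : walk 0 ξ u = walk 0 ξ (u + k)) :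
    IsCut u k (walk 0 ξ) (walk 0 (cutS u k ξ)) := by
  have h1 : ∀ j ≤ u, walk 0 (cutS u k ξ) j = walk 0 ξ j := by
    intro j
    induction j with
    | zero => intro _; rfl
    | succ j ih =>
      intro hj
      rw [walk, walk, ih (by omega)]
      simp [cutS, show j < u by omega]
  refine ⟨h1, ?_⟩
  intro j hj
  induction j, hj using Nat.le_induction with
  | base => rw [h1 u le_rfl, h]
  | succ j hj ih =>
    rw [show j + 1 + k = (j + k) + 1 by ring, walk, walk, ih]
    simp [cutS, show ¬ j < u by omega]

structure Good (ω : ℕ → V d) : Prop where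
  zero : ω 0 = 0
  adj : ∀ i, adj (ω i) (ω (i + 1))
  fin : ∀ x, {j | ω j = x}.Finite

lemma valid_of_mem (D : Set (V d)) (ω : ℕ → V d) (hg : Good ω) (i : ℕ)
    (h : stopAt D ω (stT (stopAt D ω) i) ∈ D) : Valid (stopAt D ω) i := by
  unfold Valid
  rw [leTime_eq]
  apply lastVisit_spec
  refine (hg.fin (stopAt D ω (stT (stopAt D ω) i))).subset ?_
  rintro j ⟨_, hj⟩
  have : stopAt D ω j ∈ D := by rw [hj]; exact h
  have := stopAt_eq_of_mem D ω j this
  simp only [Set.mem_ofPred_eq]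
  rw [← this, hj]

lemma inQ (N : ℕ) (D : Set (V d)) (hD : cube 0 N ⊆ D) (ω : ℕ → V d) (hg : Good ω) (i : ℕ)
    (h : ∀ j < i, infLoopErase (stopAt D ω) j ∉ innerBdry (cube (0 : V d) N)) :
    stopAt D ω (stT (stopAt D ω) i) ∈ cube (0 : V d) N := by
  induction i with
  | zero =>
    rw [stT, stopAt_zero, hg.zero]
    intro i; simp
  | succ i ih =>
    have h1 := ih (fun j hj => h j (by omega))
    have hv := valid_of_mem D ω hg i (hD h1)
    have h2 : stopAt D ω (leTime (stopAt D ω) i) ∈ cube (0 : V d) N := by rw [hv.2.1]; exact h1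
    have h3 := h i (by omega)
    by_contra hcon
    apply h3
    refine ⟨h2, stopAt D ω (stT (stopAt D ω) (i+1)), ?_, hcon⟩
    have h4 := stopAt_eq_of_mem D ω _ (hD h2)
    have h5 := stopAt_succ D ω (leTime (stopAt D ω) i)
    rw [if_pos (hD h2)] at h5
    rw [infLoopErase, h4, stT, h5]
    exact hg.adj _

lemma cube_finite (N : ℕ) : (cube (0 : V d) N).Finite := by
  have : cube (0 : V d) N ⊆ {f : V d | ∀ i, f i ∈ Set.Icc (-(N:ℤ)) N} := by
    intro x hx i
    have := hx i
    simp only [Pi.zero_apply, sub_zero] at this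
    exact abs_le.1 this
  exact (Set.Finite.pi' fun _ => Set.finite_Icc _ _).subset this

lemma exists_firstHit (N : ℕ) (D : Set (V d)) (hD : cube 0 N ⊆ D) (ω : ℕ → V d) (hg : Good ω) :
    ∃ n, FirstHit (innerBdry (cube (0 : V d) N)) (stopAt D ω) n := by
  by_cases hex : ∃ n, infLoopErase (stopAt D ω) n ∈ innerBdry (cube (0 : V d) N)
  · exact ⟨Nat.find hex, Nat.find_spec hex, fun j hj => Nat.find_min hex hj⟩
  · exfalso
    push Not at hex
    have hQ := fun i => inQ N D hD ω hg i (fun j _ => hex j)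
    have hv := fun i => valid_of_mem D ω hg i (hD (hQ i))
    have hmono : StrictMono (leTime (stopAt D ω)) := by
      apply strictMono_nat_of_lt_succ
      intro i
      have := leTime_lt _ (i+1) (fun j _ => hv j) (i+1) le_rfl i (by omega)
      have := (hv (i+1)).1
      omega
    have hfin : {j | ω j ∈ cube (0 : V d) N}.Finite := by
      have : {j | ω j ∈ cube (0 : V d) N} = ⋃ x ∈ cube (0 : V d) N, {j | ω j = x} := by
        ext; simp
      rw [this]
      exact (cube_finite N).biUnion fun x _ => hg.fin x
    refine Set.infinite_range_of_injective hmono.injective (hfin.subset ?_)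
    rintro _ ⟨i, rfl⟩
    have h2 : stopAt D ω (leTime (stopAt D ω) i) ∈ cube (0 : V d) N := by
      rw [(hv i).2.1]; exact hQ i
    simp only [Set.mem_ofPred_eq]
    rwa [← stopAt_eq_of_mem D ω _ (hD h2)]

lemma firstHit_hitIdx (A : Set (V d)) (η : ℕ → V d) (n : ℕ) (h : FirstHit A η n) :
    hitIdx A (infLoopErase η) = n := by
  have hex : ∃ j, infLoopErase η j ∈ A := ⟨n, h.1⟩
  unfold hitIdx hitTimeE
  rw [dif_pos hex]
  change Nat.find hex = n
  rw [Nat.find_eq_iff]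
  exact ⟨h.1, h.2⟩

lemma bdry_coord (N : ℕ) (x : V d) (h : x ∈ innerBdry (cube (0 : V d) N)) :
    ∃ i, (N : ℤ) ≤ |x i| := by
  obtain ⟨hx, y, hadj, hy⟩ := h
  by_contra! hcon
  apply hy
  obtain ⟨⟨k, b⟩, rfl⟩ := (adj_iff _ _).1 hadj
  intro i
  have h1 := hcon i
  simp only [Pi.zero_apply, sub_zero, Pi.add_apply]
  have h2 : |ev (k, b) i| ≤ 1 := by
    simp only [ev]
    split_ifs <;> simp
  have := abs_add_le (x i) (ev (k,b) i)
  omega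

end Part6

section Part7

lemma meas_coord (j : ℕ) : Measurable (fun η : ℕ → V d => η j) :=
  measurable_pi_apply (X := fun _ : ℕ => V d) j

lemma meas_eqset (i j : ℕ) : MeasurableSet {η : ℕ → V d | η i = η j} :=
  measurableSet_eq_fun (meas_coord i) (meas_coord j)

lemma meas_stopAt (D : Set (V d)) : Measurable (stopAt D) := by
  rw [measurable_pi_iff]
  intro j
  induction j with
  | zero =>
    have : (fun ω : ℕ → V d => stopAt D ω 0) = fun ω => ω 0 := by
      funext ω; exact stopAt_zero D ω
    rw [this]; exact meas_coord 0
  | succ j ih =>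
    have : (fun ω : ℕ → V d => stopAt D ω (j+1)) =
        fun ω => if stopAt D ω j ∈ D then ω (j+1) else stopAt D ω j := by
      funext ω; exact stopAt_succ D ω j
    rw [this]
    exact Measurable.ite (ih (measSet_V D)) (meas_coord _) ih

lemma lastVisit_le_iff (η : ℕ → V d) (t m : ℕ) :
    lastVisit η t ≤ m ↔ (∀ j, t ≤ j → η j = η t → j ≤ m) ∨ (∀ b, ∃ j, b < j ∧ t ≤ j ∧ η j = η t) := by
  unfold lastVisit
  by_cases hb : BddAbove {j | t ≤ j ∧ η j = η t}
  · constructor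
    · intro h
      left
      intro j h1 h2
      exact (le_csSup hb ⟨h1, h2⟩).trans h
    · rintro (h | h)
      · exact csSup_le ⟨t, le_rfl, rfl⟩ fun j hj => h j hj.1 hj.2
      · obtain ⟨b, hb⟩ := hb
        obtain ⟨j, h1, h2⟩ := h b
        exact absurd (hb h2) (by omega)
  · constructor
    · intro _
      right
      intro b
      by_contra! hcon
      apply hb
      refine ⟨b, fun j hj => ?_⟩
      by_contra hlt
      exact hcon j (by omega) hj.1 hj.2
    · intro _
      rw [csSup_of_not_bddAbove hb]
      simp

lemma meas_lastVisit (t : ℕ) : Measurable (fun η : ℕ → V d => lastVisit η t) := by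
  apply measurable_of_Iic
  intro m
  have : (fun η : ℕ → V d => lastVisit η t) ⁻¹' Set.Iic m =
      (⋂ j, ⋂ (_ : t ≤ j), ⋂ (_ : ¬ j ≤ m), {η : ℕ → V d | η j = η t}ᶜ) ∪
      ⋂ b, ⋃ j, ⋃ (_ : b < j ∧ t ≤ j), {η : ℕ → V d | η j = η t} := by
    ext η
    simp only [Set.mem_preimage, Set.mem_Iic, lastVisit_le_iff, Set.mem_union, Set.mem_iInter,
      Set.mem_iUnion, Set.mem_compl_iff, Set.mem_ofPred_eq, exists_prop, and_assoc]
    refine or_congr ?_ Iff.rfl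
    refine forall_congr' fun j => forall_congr' fun _ => ?_
    tauto
  rw [this]
  refine MeasurableSet.union ?_ ?_
  · exact MeasurableSet.iInter fun j => MeasurableSet.iInter fun _ => MeasurableSet.iInter fun _ =>
      (meas_eqset _ _).compl
  · exact MeasurableSet.iInter fun b => MeasurableSet.iUnion fun j => MeasurableSet.iUnion fun _ =>
      meas_eqset _ _

lemma meas_comp_nat {Ω β : Type*} [MeasurableSpace Ω] [MeasurableSpace β]
    (F : ℕ → Ω → β) (hF : ∀ n, Measurable (F n)) (f : Ω → ℕ) (hf : Measurable f) :
    Measurable (fun w => F (f w) w) := by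
  intro s hs
  have : (fun w => F (f w) w) ⁻¹' s = ⋃ n, f ⁻¹' {n} ∩ F n ⁻¹' s := by
    ext w; simp
  rw [this]
  exact MeasurableSet.iUnion fun n => (hf (measurableSet_singleton n)).inter (hF n hs)

lemma meas_leTime (k : ℕ) : Measurable (fun η : ℕ → V d => leTime η k) := by
  induction k with
  | zero => exact meas_lastVisit 0
  | succ k ih =>
    exact meas_comp_nat (fun n (η : ℕ → V d) => lastVisit η n) meas_lastVisit
      (fun η => leTime η k + 1) (ih.add_const 1)

lemma meas_stT (k : ℕ) : Measurable (fun η : ℕ → V d => stT η k) := by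
  cases k with
  | zero => exact measurable_const
  | succ k => exact (meas_leTime k).add_const 1

lemma meas_le (k : ℕ) : Measurable (fun η : ℕ → V d => infLoopErase η k) :=
  meas_comp_nat (fun n (η : ℕ → V d) => η n) meas_coord _ (meas_leTime k)

lemma meas_firstHit (A : Set (V d)) (n : ℕ) : MeasurableSet {η : ℕ → V d | FirstHit A η n} := by
  have : {η : ℕ → V d | FirstHit A η n} = (fun η : ℕ → V d => infLoopErase η n) ⁻¹' A ∩
      ⋂ j, ⋂ (_ : j < n), (fun η : ℕ → V d => infLoopErase η j) ⁻¹' Aᶜ := by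
    ext η; simp [FirstHit]
  rw [this]
  exact (meas_le n (measSet_V _)).inter (MeasurableSet.iInter fun j => MeasurableSet.iInter fun _ =>
    meas_le j (measSet_V _))

/-- the hitting event on steps -/
def HH (N : ℕ) (D : Set (V d)) (n : ℕ) : Set (ℕ → U d) :=
  {ξ | FirstHit (innerBdry (cube (0 : V d) N)) (stopAt D (walk 0 ξ)) n}

lemma meas_HH (N : ℕ) (D : Set (V d)) (n : ℕ) : MeasurableSet (HH N D n) :=
  ((meas_stopAt D).comp (measurable_walk 0)) (meas_firstHit (innerBdry (cube (0 : V d) N)) n)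

/-- start time of loop -/
noncomputable def UU (D : Set (V d)) (i : ℕ) (ξ : ℕ → U d) : ℕ := stT (stopAt D (walk 0 ξ)) i
/-- end time of loop -/
noncomputable def TT (D : Set (V d)) (i : ℕ) (ξ : ℕ → U d) : ℕ := leTime (stopAt D (walk 0 ξ)) i

lemma meas_UU (D : Set (V d)) (i : ℕ) : Measurable (UU D i) :=
  (meas_stT i).comp ((meas_stopAt D).comp (measurable_walk 0))
lemma meas_TT (D : Set (V d)) (i : ℕ) : Measurable (TT D i) :=
  (meas_leTime i).comp ((meas_stopAt D).comp (measurable_walk 0))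

end Part7

section Part8

lemma all_valid (N : ℕ) (D : Set (V d)) (hD : cube 0 N ⊆ D) (ξ : ℕ → U d) (hg : Good (walk 0 ξ))
    (n : ℕ) (h : ξ ∈ HH N D n) : ∀ i ≤ n, Valid (stopAt D (walk 0 ξ)) i := fun i hi =>
  valid_of_mem D _ hg i (hD (inQ N D hD _ hg i fun j hj => h.2 j (by omega)))

lemma cut_event (N : ℕ) (D : Set (V d)) (hD : cube 0 N ⊆ D) (ξ : ℕ → U d) (hg : Good (walk 0 ξ))
    (n i u k : ℕ) (hi : i ≤ n) (h : ξ ∈ HH N D n) (hu : UU D i ξ = u) (hk : TT D i ξ = u + k) :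
    walk 0 ξ u = walk 0 ξ (u + k) ∧
      cutS u k ξ ∈ HH N D n ∩ (UU D i ⁻¹' {u} ∩ TT D i ⁻¹' {u}) := by
  have hv := all_valid N D hD ξ hg n h
  have hin : stopAt D (walk 0 ξ) u ∈ D := by
    rw [← hu]
    exact hD (inQ N D hD _ hg i fun j hj => h.2 j (by omega))
  have he : stopAt D (walk 0 ξ) (u + k) = stopAt D (walk 0 ξ) u := by
    have := (hv i hi).2.1
    change stopAt D (walk 0 ξ) (TT D i ξ) = stopAt D (walk 0 ξ) (UU D i ξ) at this
    rwa [hk, hu] at this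
  have hin2 : stopAt D (walk 0 ξ) (u + k) ∈ D := he ▸ hin
  have hw : walk 0 ξ u = walk 0 ξ (u + k) := by
    rw [← stopAt_eq_of_mem D _ _ hin, ← stopAt_eq_of_mem D _ _ hin2, he]
  have hc := stopAt_cut D u k _ _ (walk_cut u k ξ hw) (stopAt_mem D _ _ hin2)
  have := cut_firstHit (innerBdry (cube (0 : V d) N)) u k n i _ _ hc hi hv hu hk h
  exact ⟨hw, this.1, this.2.1, this.2.2⟩

variable [NeZero d]

lemma good_ae (hd : 5 ≤ d) : ∀ᵐ ξ ∂(P0 d), Good (walk (0 : V d) ξ) := by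
  filter_upwards [transient hd] with ξ h
  exact ⟨rfl, fun i => walk_adj 0 ξ i, h⟩

lemma prob_cut (hd : 5 ≤ d) (N : ℕ) (D : Set (V d)) (hD : cube 0 N ⊆ D) (n i u k : ℕ) (hi : i ≤ n) :
    P0 d (HH N D n ∩ (UU D i ⁻¹' {u} ∩ TT D i ⁻¹' {u + k})) ≤
      ENNReal.ofReal (pr d k 0) * P0 d (HH N D n ∩ (UU D i ⁻¹' {u} ∩ TT D i ⁻¹' {u})) := by
  rw [← P0_cut k u 0 ((meas_HH N D n).inter ((meas_UU D i (measurableSet_singleton u)).inter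
    (meas_TT D i (measurableSet_singleton u))))]
  apply measure_mono_ae
  filter_upwards [good_ae hd] with ξ hg h
  exact cut_event N D hD ξ hg n i u k hi h.1 h.2.1 h.2.2

lemma exp_loop (hd : 5 ≤ d) (K : ℝ) (hK0 : 0 ≤ K)
    (hK : ∀ m, ∑ k ∈ Finset.range m, ((k:ℝ)+1) * pr d k 0 ≤ K)
    (N : ℕ) (D : Set (V d)) (hD : cube 0 N ⊆ D) (n i : ℕ) (hi : i ≤ n) :
    ∫⁻ ξ, (HH N D n).indicator (fun ξ => ((TT D i ξ - UU D i ξ : ℕ) : ℝ≥0∞)) ξ ∂(P0 d)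
      ≤ ENNReal.ofReal K * P0 d (HH N D n) := by
  have hmeas : ∀ u k, MeasurableSet (HH N D n ∩ (UU D i ⁻¹' {u} ∩ TT D i ⁻¹' {u + k})) :=
    fun u k => (meas_HH N D n).inter ((meas_UU D i (measurableSet_singleton u)).inter
      (meas_TT D i (measurableSet_singleton _)))
  calc _ ≤ ∫⁻ ξ, ∑' u, ∑' k, (HH N D n ∩ (UU D i ⁻¹' {u} ∩ TT D i ⁻¹' {u + k})).indicator
          (fun _ => (k : ℝ≥0∞)) ξ ∂(P0 d) := by
        apply lintegral_mono
        intro ξ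
        by_cases h : ξ ∈ HH N D n
        · rw [Set.indicator_of_mem h]
          by_cases hle : UU D i ξ ≤ TT D i ξ
          · refine le_trans ?_ (ENNReal.le_tsum (UU D i ξ))
            refine le_trans ?_ (ENNReal.le_tsum (TT D i ξ - UU D i ξ))
            rw [Set.indicator_of_mem]
            refine ⟨h, rfl, ?_⟩
            simp only [Set.mem_preimage, Set.mem_singleton_iff]
            omega
          · rw [Nat.sub_eq_zero_of_le (by omega)]
            simp
        · rw [Set.indicator_of_notMem h]; exact bot_le
    _ = ∑' u, ∑' k : ℕ, (k : ℝ≥0∞) * P0 d (HH N D n ∩ (UU D i ⁻¹' {u} ∩ TT D i ⁻¹' {u + k})) := by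
        rw [lintegral_tsum]
        · congr 1; funext u
          rw [lintegral_tsum]
          · congr 1; funext k
            rw [lintegral_indicator_const (hmeas u k)]
          · intro k; exact (measurable_const.indicator (hmeas u k)).aemeasurable
        · intro u
          exact (Measurable.tsum fun k => measurable_const.indicator (hmeas u k)).aemeasurable
    _ ≤ ∑' u, ∑' k : ℕ, ((k : ℝ≥0∞) * ENNReal.ofReal (pr d k 0)) * P0 d (HH N D n ∩ UU D i ⁻¹' {u}) := by
        refine ENNReal.tsum_le_tsum fun u => ENNReal.tsum_le_tsum fun k => ?_
        rw [mul_assoc]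
        gcongr (k : ℝ≥0∞) * ?_
        refine (prob_cut hd N D hD n i u k hi).trans ?_
        gcongr
        exact Set.inter_subset_left
    _ = (∑' k : ℕ, ((k : ℝ≥0∞) * ENNReal.ofReal (pr d k 0))) * ∑' u, P0 d (HH N D n ∩ UU D i ⁻¹' {u}) := by
        rw [← ENNReal.tsum_mul_left]
        congr 1; funext u
        rw [ENNReal.tsum_mul_right]
    _ ≤ ENNReal.ofReal K * P0 d (HH N D n) := by
        gcongr
        · apply ENNReal.tsum_le_of_sum_range_le
          intro m
          refine le_trans ?_ (ENNReal.ofReal_le_ofReal (hK m))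
          rw [ENNReal.ofReal_sum_of_nonneg
            (fun k _ => mul_nonneg (by positivity) (pr_nonneg k 0))]
          refine Finset.sum_le_sum fun k _ => ?_
          rw [ENNReal.ofReal_mul (by positivity)]
          gcongr
          rw [← ENNReal.ofReal_natCast]
          exact ENNReal.ofReal_le_ofReal (by linarith)
        · rw [← measure_iUnion]
          · apply measure_mono
            intro ξ h
            simp only [Set.mem_iUnion] at h
            obtain ⟨u, hu⟩ := h
            exact hu.1
          · intro u v huv
            refine Set.disjoint_left.2 fun ξ h1 h2 => huv ?_
            exact h1.2.symm.trans h2.2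
          · intro u
            exact (meas_HH N D n).inter (meas_UU D i (measurableSet_singleton u))

lemma exp_T (hd : 5 ≤ d) (K : ℝ) (hK0 : 0 ≤ K)
    (hK : ∀ m, ∑ k ∈ Finset.range m, ((k:ℝ)+1) * pr d k 0 ≤ K)
    (N : ℕ) (D : Set (V d)) (hD : cube 0 N ⊆ D) (n : ℕ) :
    ∫⁻ ξ, (HH N D n).indicator (fun ξ => ((TT D n ξ : ℕ) : ℝ≥0∞)) ξ ∂(P0 d)
      ≤ ENNReal.ofReal ((K + 1) * (n + 1)) * P0 d (HH N D n) := by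
  calc _ ≤ ∫⁻ ξ, (∑ i ∈ Finset.range (n+1),
          (HH N D n).indicator (fun ξ => ((TT D i ξ - UU D i ξ : ℕ) : ℝ≥0∞)) ξ) +
          (HH N D n).indicator (fun _ => (n : ℝ≥0∞)) ξ ∂(P0 d) := by
        apply lintegral_mono_ae
        filter_upwards [good_ae hd] with ξ hg
        by_cases h : ξ ∈ HH N D n
        · simp only [Set.indicator_of_mem h]
          have := leTime_sum _ n (all_valid N D hD ξ hg n h)
          have h2 : TT D n ξ = ∑ i ∈ Finset.range (n+1), (TT D i ξ - UU D i ξ) + n := this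
          rw [h2]; push_cast; exact le_rfl
        · simp [Set.indicator_of_notMem h]
    _ = (∑ i ∈ Finset.range (n+1), ∫⁻ ξ,
          (HH N D n).indicator (fun ξ => ((TT D i ξ - UU D i ξ : ℕ) : ℝ≥0∞)) ξ ∂(P0 d)) +
          n * P0 d (HH N D n) := by
        rw [lintegral_add_right _ (measurable_const.indicator (meas_HH N D n)),
          lintegral_indicator_const (meas_HH N D n), lintegral_finsetSum]
        intro i _
        refine Measurable.indicator ?_ (meas_HH N D n)
        exact (measurable_of_countable (fun n : ℕ => (n : ℝ≥0∞))).comp ((meas_TT D i).sub (meas_UU D i))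
    _ ≤ (∑ i ∈ Finset.range (n+1), ENNReal.ofReal K * P0 d (HH N D n)) + n * P0 d (HH N D n) := by
        gcongr with i hi
        exact exp_loop hd K hK0 hK N D hD n i (by simp at hi; omega)
    _ ≤ _ := by
        rw [Finset.sum_const, Finset.card_range, nsmul_eq_mul, ← mul_assoc, ← add_mul]
        gcongr
        rw [← ENNReal.ofReal_natCast, ← ENNReal.ofReal_natCast, ← ENNReal.ofReal_mul (by positivity),
          ← ENNReal.ofReal_add (by positivity) (by positivity)]
        apply ENNReal.ofReal_le_ofReal
        push_cast
        nlinarith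

lemma markov_T (hd : 5 ≤ d) (K : ℝ) (hK0 : 0 ≤ K)
    (hK : ∀ m, ∑ k ∈ Finset.range m, ((k:ℝ)+1) * pr d k 0 ≤ K)
    (N : ℕ) (D : Set (V d)) (hD : cube 0 N ⊆ D) (n : ℕ) :
    P0 d (HH N D n) ≤ 2 * P0 d (HH N D n ∩ {ξ | (TT D n ξ : ℝ) < 2 * ((K + 1) * (n + 1))}) := by
  set a : ℝ := (K + 1) * (n + 1) with ha
  have ha0 : 0 < a := by positivity
  have hms : MeasurableSet {ξ : ℕ → U d | (TT D n ξ : ℝ) < 2 * a} :=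
    (meas_TT D n) (MeasurableSet.of_discrete (s := {m : ℕ | (m : ℝ) < 2 * a}))
  set B := HH N D n ∩ {ξ | (TT D n ξ : ℝ) < 2 * a} with hB
  set B' := HH N D n \ {ξ | (TT D n ξ : ℝ) < 2 * a} with hB'
  have h1 : ENNReal.ofReal (2 * a) * P0 d B' ≤ ENNReal.ofReal a * P0 d (HH N D n) := by
    refine le_trans ?_ (exp_T hd K hK0 hK N D hD n)
    rw [← lintegral_indicator_const ((meas_HH N D n).diff hms)]
    apply lintegral_mono
    intro ξ
    by_cases h : ξ ∈ B'
    · rw [Set.indicator_of_mem h, Set.indicator_of_mem h.1, ← ENNReal.ofReal_natCast]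
      apply ENNReal.ofReal_le_ofReal
      have := h.2
      simp only [Set.mem_ofPred_eq, not_lt] at this
      exact this
    · rw [Set.indicator_of_notMem h]; exact bot_le
  have h2 : P0 d (HH N D n) = P0 d B + P0 d B' := (measure_inter_add_sdiff _ hms).symm
  have f : ∀ s, P0 d s ≠ ⊤ := fun s => measure_ne_top _ s
  lift P0 d (HH N D n) to NNReal using f _ with p
  lift P0 d B to NNReal using f _ with b
  lift P0 d B' to NNReal using f _ with b'
  have h2' : (p : ℝ) = b + b' := by exact_mod_cast h2
  have h1' : 2 * a * (b' : ℝ) ≤ a * p := by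
    have := ENNReal.toReal_mono (by finiteness) h1
    simpa [ENNReal.toReal_mul, ENNReal.toReal_ofReal, ha0.le] using this
  have h3 : (p : ℝ) ≤ 2 * b := by nlinarith
  exact_mod_cast h3

end Part8

section Part9

lemma hit_of_HH (N : ℕ) (hN : 1 ≤ N) (D : Set (V d)) (hD : cube 0 N ⊆ D) (ξ : ℕ → U d)
    (hg : Good (walk 0 ξ)) (n : ℕ) (h : ξ ∈ HH N D n) :
    1 ≤ n ∧ ∃ i, (N : ℤ) ≤ |walk 0 ξ (TT D n ξ) i| := by
  have h1 : stopAt D (walk 0 ξ) (TT D n ξ) ∈ innerBdry (cube (0 : V d) N) := h.1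
  have h2 := stopAt_eq_of_mem D _ _ (hD h1.1)
  have h3 : walk 0 ξ (TT D n ξ) ∈ innerBdry (cube (0 : V d) N) := h2 ▸ h1
  refine ⟨?_, bdry_coord N _ h3⟩
  rcases Nat.eq_zero_or_pos n with rfl | hn
  · exfalso
    have hv := (all_valid N D hD ξ hg 0 h 0 le_rfl).2.1
    have h4 : stopAt D (walk 0 ξ) (TT D 0 ξ) = stopAt D (walk 0 ξ) 0 := hv
    rw [stopAt_zero, hg.zero] at h4
    rw [h4] at h1
    obtain ⟨i, hi⟩ := bdry_coord N _ h1
    simp at hi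
    omega
  · exact hn

variable [NeZero d]

lemma main_bound (hd : 5 ≤ d) (K : ℝ) (hK0 : 0 ≤ K)
    (hK : ∀ m, ∑ k ∈ Finset.range m, ((k:ℝ)+1) * pr d k 0 ≤ K)
    (N : ℕ) (hN : 1 ≤ N) (D : Set (V d)) (hD : cube 0 N ⊆ D) (x : ℝ) :
    P0 d {ξ | ∃ n : ℕ, (n : ℝ) < x ∧ ξ ∈ HH N D n} ≤
      2 * P0 d {ξ | ∃ j ≤ ⌊4 * (K + 1) * x⌋₊, ∃ i, (N:ℤ) ≤ |walk 0 ξ j i|} := by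
  have hms : ∀ n, MeasurableSet {ξ : ℕ → U d | (TT D n ξ : ℝ) < 2 * ((K + 1) * (n + 1))} := fun n =>
    (meas_TT D n) (MeasurableSet.of_discrete (s := {m : ℕ | (m : ℝ) < 2 * ((K + 1) * (n + 1))}))
  let G : ℕ → Set (ℕ → U d) := fun n => if (n : ℝ) < x then
    HH N D n ∩ {ξ | (TT D n ξ : ℝ) < 2 * ((K + 1) * (n + 1))} else ∅
  let F : ℕ → Set (ℕ → U d) := fun n => if (n : ℝ) < x then HH N D n else ∅
  calc _ ≤ P0 d (⋃ n, F n) := by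
        apply measure_mono
        rintro ξ ⟨n, hn, h⟩
        refine Set.mem_iUnion.2 ⟨n, ?_⟩
        simp only [F]; rw [if_pos hn]; exact h
    _ ≤ ∑' n, P0 d (F n) := measure_iUnion_le _
    _ ≤ ∑' n, 2 * P0 d (G n) := by
        refine ENNReal.tsum_le_tsum fun n => ?_
        simp only [F, G]
        split_ifs
        · exact markov_T hd K hK0 hK N D hD n
        · simp
    _ = 2 * P0 d (⋃ n, G n) := by
        rw [ENNReal.tsum_mul_left, measure_iUnion]
        · intro n m hnm
          refine Set.disjoint_left.2 fun ξ h1 h2 => hnm ?_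
          simp only [G] at h1 h2
          split_ifs at h1 with a1
          · split_ifs at h2 with a2
            · exact (firstHit_hitIdx _ _ _ h1.1).symm.trans (firstHit_hitIdx _ _ _ h2.1)
            · exact absurd h2 (Set.notMem_empty _)
          · exact absurd h1 (Set.notMem_empty _)
        · intro n
          simp only [G]
          split_ifs
          · exact (meas_HH N D n).inter (hms n)
          · exact MeasurableSet.empty
    _ ≤ _ := by
        gcongr 2 * ?_
        apply measure_mono_ae
        filter_upwards [good_ae hd] with ξ hg h
        obtain ⟨n, hn⟩ := Set.mem_iUnion.1 h
        simp only [G] at hn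
        split_ifs at hn with a1
        · obtain ⟨h1, h2⟩ := hit_of_HH N hN D hD ξ hg n hn.1
          refine ⟨TT D n ξ, ?_, h2⟩
          apply Nat.le_floor
          have h3 : (TT D n ξ : ℝ) < 2 * ((K + 1) * (n + 1)) := hn.2
          have h4 : (1:ℝ) ≤ n := by exact_mod_cast h1
          have h5 : (n:ℝ) + 1 ≤ 2 * x := by linarith
          nlinarith
        · exact absurd hn (Set.notMem_empty _)

lemma final_exp (K : ℝ) (hK0 : 0 ≤ K) (N : ℕ) (hN : 1 ≤ N) (lam : ℝ) (hl : 0 < lam) :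
    ∃ θ : ℝ, 0 ≤ θ ∧ Real.exp (-θ * N) * Real.cosh θ ^ ⌊4 * (K + 1) * (lam * (N:ℝ)^2)⌋₊ ≤
      Real.exp (-(1 / (8 * (K + 1))) * lam⁻¹) := by
  have hN' : (0:ℝ) < N := by exact_mod_cast hN
  have hK1 : 0 < K + 1 := by linarith
  refine ⟨1 / (4 * (K + 1) * lam * N), by positivity, ?_⟩
  set θ : ℝ := 1 / (4 * (K + 1) * lam * N) with hθ
  set t := ⌊4 * (K + 1) * (lam * (N:ℝ)^2)⌋₊ with ht
  have h1 : Real.cosh θ ^ t ≤ Real.exp (t * (θ ^ 2 / 2)) := by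
    rw [Real.exp_nat_mul]
    exact pow_le_pow_left₀ (Real.cosh_pos _).le (Real.cosh_le_exp_half_sq θ) t
  have h2 : (t : ℝ) ≤ 4 * (K + 1) * (lam * (N:ℝ)^2) := Nat.floor_le (by positivity)
  calc _ ≤ Real.exp (-θ * N) * Real.exp (t * (θ ^ 2 / 2)) := by gcongr
    _ = Real.exp (-θ * N + t * (θ ^ 2 / 2)) := (Real.exp_add _ _).symm
    _ ≤ _ := by
      apply Real.exp_le_exp.2
      have h3 : (t:ℝ) * (θ ^ 2 / 2) ≤ 4 * (K + 1) * (lam * (N:ℝ)^2) * (θ ^ 2 / 2) := by gcongr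
      refine (add_le_add_right h3 _).trans (le_of_eq ?_)
      rw [hθ]
      field_simp
      norm_num

theorem lower_tail_aux (hd : 5 ≤ d) (K : ℝ) (hK0 : 0 ≤ K)
    (hK : ∀ m, ∑ k ∈ Finset.range m, ((k:ℝ)+1) * pr d k 0 ≤ K)
    (N : ℕ) (D : Set (V d)) (hN : 1 ≤ N) (hD4 : cube 0 (4 * N) ⊆ D)
    (μ : Measure (ℕ → V d)) (hμ : IsSRWLaw μ 0) (lam : ℝ) (hl : 0 < lam) :
    (μ { ω | ((hitIdx (innerBdry (cube 0 N)) (lerw D ω) : ℝ)) < lam * (N : ℝ) ^ 2 }).toReal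
          ≤ 4 * d * Real.exp (-(1 / (8 * (K + 1))) * lam⁻¹) := by
  have hD : cube (0 : V d) N ⊆ D := by
    intro y hy
    apply hD4
    intro i
    refine (hy i).trans ?_
    push_cast; omega
  obtain ⟨θ, hθ0, hθ⟩ := final_exp K hK0 N hN lam hl
  have hA : ∀ n, MeasurableSet
      {ω : ℕ → V d | FirstHit (innerBdry (cube (0 : V d) N)) (stopAt D ω) n} := fun n =>
    meas_stopAt D (meas_firstHit (innerBdry (cube (0 : V d) N)) n)
  set x := lam * (N : ℝ) ^ 2 with hx
  let E1 : Set (ℕ → V d) := ⋃ n : ℕ, ⋃ (_ : (n : ℝ) < x),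
    {ω : ℕ → V d | FirstHit (innerBdry (cube (0 : V d) N)) (stopAt D ω) n}
  let E2 : Set (ℕ → V d) :=
    (⋃ n : ℕ, {ω : ℕ → V d | FirstHit (innerBdry (cube (0 : V d) N)) (stopAt D ω) n})ᶜ
  have hE1 : MeasurableSet E1 := MeasurableSet.iUnion fun n => MeasurableSet.iUnion fun _ => hA n
  have hE2 : MeasurableSet E2 := (MeasurableSet.iUnion hA).compl
  have hsub : { ω | ((hitIdx (innerBdry (cube 0 N)) (lerw D ω) : ℝ)) < x } ⊆ E1 ∪ E2 := by
    intro ω hω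
    by_cases h : ∃ n, FirstHit (innerBdry (cube (0 : V d) N)) (stopAt D ω) n
    · obtain ⟨n, hn⟩ := h
      left
      have := firstHit_hitIdx _ _ _ hn
      simp only [Set.mem_ofPred_eq, lerw, this] at hω
      exact Set.mem_iUnion.2 ⟨n, Set.mem_iUnion.2 ⟨hω, hn⟩⟩
    · right
      intro h'
      exact h (Set.mem_iUnion.1 h')
  have hbound : μ { ω | ((hitIdx (innerBdry (cube 0 N)) (lerw D ω) : ℝ)) < x } ≤
      2 * ENNReal.ofReal (2*d*(Real.exp (-θ*N) * Real.cosh θ ^ ⌊4 * (K + 1) * x⌋₊)) := by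
    rw [law_unique μ hμ]
    have e2 : (P0 d).map (walk 0) E2 = 0 := by
      rw [Measure.map_apply (measurable_walk 0) hE2]
      have : ∀ᵐ ξ ∂(P0 d), ξ ∉ (walk 0) ⁻¹' E2 := by
        filter_upwards [good_ae hd] with ξ hg h
        obtain ⟨n, hn⟩ := exists_firstHit N D hD _ hg
        exact h (Set.mem_iUnion.2 ⟨n, hn⟩)
      exact measure_eq_zero_iff_ae_notMem.2 this
    calc _ ≤ (P0 d).map (walk 0) (E1 ∪ E2) := measure_mono hsub
      _ ≤ (P0 d).map (walk 0) E1 + (P0 d).map (walk 0) E2 := measure_union_le _ _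
      _ = P0 d ((walk 0) ⁻¹' E1) := by
        rw [e2, add_zero, Measure.map_apply (measurable_walk 0) hE1]
      _ ≤ P0 d {ξ | ∃ n : ℕ, (n : ℝ) < x ∧ ξ ∈ HH N D n} := by
        apply measure_mono
        intro ξ h
        obtain ⟨n, hn⟩ := Set.mem_iUnion.1 h
        obtain ⟨hn1, hn2⟩ := Set.mem_iUnion.1 hn
        exact ⟨n, hn1, hn2⟩
      _ ≤ _ := main_bound hd K hK0 hK N hN D hD x
      _ ≤ _ := by
        gcongr 2 * ?_
        exact hit_bound N θ hθ0 _
  have h2 := ENNReal.toReal_mono (by finiteness) hbound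
  refine h2.trans ?_
  have hc : 0 ≤ Real.exp (-θ*N) * Real.cosh θ ^ ⌊4 * (K + 1) * x⌋₊ :=
    mul_nonneg (Real.exp_pos _).le (pow_nonneg (Real.cosh_pos _).le _)
  rw [ENNReal.toReal_mul, ENNReal.toReal_ofReal (mul_nonneg (by positivity) hc)]
  have : (2 : ℝ≥0∞).toReal = 2 := by simp
  rw [this]
  have := mul_le_mul_of_nonneg_left hθ (by positivity : (0:ℝ) ≤ 4 * d)
  linarith

end Part9

/-- Proposition 3.10 (lower tail of the LERW length).  Let `d ≥ 5`, `N ≥ 1`,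
`Q_{4N} ⊆ D ⊆ ℤ^d`.  Let `L` be the loop erasure of SRW from `0` stopped at its first
exit from `D`, and `M_N` the number of steps of `L` until its first hit of `∂ᵢQ_N`.
Then there are `C, c > 0` depending only on `d` such that for all `λ > 0`,
`P( M_N < λ N² ) ≤ C exp( -c λ⁻¹ )`. -/
theorem lerw_length_lower_tail :
    ∀ d : ℕ, 5 ≤ d → ∃ C c : ℝ, 0 < C ∧ 0 < c ∧
      ∀ (N : ℕ) (D : Set (V d)), 1 ≤ N → cube 0 (4 * N) ⊆ D →
      ∀ μ : Measure (ℕ → V d), IsSRWLaw μ 0 →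
      ∀ lam : ℝ, 0 < lam →
        (μ { ω | ((hitIdx (innerBdry (cube 0 N)) (lerw D ω) : ℝ)) < lam * (N : ℝ) ^ 2 }).toReal
          ≤ C * Real.exp (-c * lam⁻¹) := by
  intro d hd
  haveI : NeZero d := ⟨by omega⟩
  obtain ⟨K, hK0, hK⟩ := pr_bounds (d := d) hd
  have hd0 : (0 : ℝ) < d := by exact_mod_cast (by omega : 0 < d)
  refine ⟨4 * d, 1 / (8 * (K + 1)), by positivity, by positivity, ?_⟩
  intro N D hN hD μ hμ lam hl
  exact lower_tail_aux hd K hK0 (fun m => (hK m 0).2) N D hN hD μ hμ lam hl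

end USFPaper
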